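/- arXiv:0903.4969 — 3 statements merged into one kernel-verified Lean document; each statement's English description precedes it below -/
import Mathlib

section
/- Let P = ∏_{1≤j<k≤15} (1 + t_j + t_k) in 𝔽₂[t₁,…,t₁₅], and let P₈ denote the homogeneous component of P of degree 8. Then P₈ is congruent to e₈ + e₄² modulo the ideal generated by e₁, e₂, e₃, e₅. -/
open MvPolynomial Finset

/-- The `i`-th elementary symmetric polynomial in `𝔽₂[t₁,…,t₁₅]`. -/
noncomputable def e (i : ℕ) : MvPolynomial (Fin 15) (ZMod 2) :=
  esymm (Fin 15) (ZMod 2) i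

/-- `P = ∏_{1≤j<k≤15} (1 + t_j + t_k)` in `𝔽₂[t₁,…,t₁₅]`. -/
noncomputable def P : MvPolynomial (Fin 15) (ZMod 2) :=
  ∏ p ∈ univ.filter (fun p : Fin 15 × Fin 15 => p.1 < p.2), (1 + X p.1 + X p.2)

/-!
By the fundamental theorem of symmetric polynomials, a symmetric form of degree `2 * k` is a
combination of products `e_{μ₁} e_{μ₂} ⋯` over partitions `μ` of `2 * k`. Modulo `e₁, …, e_{k-1}`
only the partitions with all parts `≥ k` survive, namely `{2 * k}` and `{k, k}`, so the form is
congruent to `a e_{2k} + b e_k²`. If `k` is a power of two, the constants are detected in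
characteristic two by evaluating at the indicator vectors of sets `S` of size `2 * k` and `k`:
there `e_i` becomes `(#S).choose i`, which is even for `0 < i < #S`. On the line through the
indicator vector, `∏_{i < j} (1 + t_i + t_j)` restricts to `(1 + x) ^ (#S * #Sᶜ)`, because only the
pairs separated by `S` contribute.
-/

theorem partition_parts_eq_singleton_or_pair {k : ℕ} (hk : 0 < k) (μ : (2 * k).Partition)
    (hμ : ∀ i ∈ μ.parts, k ≤ i) : μ.parts = {2 * k} ∨ μ.parts = {k, k} := by
  have hsum : μ.parts.sum = 2 * k := μ.parts_sum
  have hcard : μ.parts.card ≤ 2 := by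
    refine Nat.le_of_mul_le_mul_right ?_ hk
    simpa only [smul_eq_mul, hsum] using Multiset.card_nsmul_le_sum hμ
  interval_cases h : μ.parts.card
  · rw [Multiset.card_eq_zero.mp h, Multiset.sum_zero] at hsum
    omega
  · obtain ⟨i, hi⟩ := Multiset.card_eq_one.mp h
    rw [hi, Multiset.sum_singleton] at hsum
    exact .inl (hi.trans (by rw [hsum]))
  · obtain ⟨i, j, hij⟩ := Multiset.card_eq_two.mp h
    simp only [hij, Multiset.insert_eq_cons, Multiset.mem_cons, Multiset.mem_singleton,
      forall_eq_or_imp, forall_eq, Multiset.sum_cons, Multiset.sum_singleton] at hμ hsum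
    obtain ⟨rfl, rfl⟩ : i = k ∧ j = k := by omega
    exact .inr hij

section BinomialCoefficients
variable {R : Type*} [AddGroupWithOne R]

theorem cast_choose_pow_mul {p : ℕ} [Fact p.Prime] [CharP R p] (r a b : ℕ) :
    ((p ^ r * a).choose (p ^ r * b) : R) = (a.choose b : R) :=
  (CharP.natCast_eq_natCast R p).mpr Choose.choose_pow_mul_pow_mul_modEq_choose_nat

theorem cast_choose_two_add_of_four_dvd [CharP R 2] {k : ℕ} (m : ℕ) (hk : 4 ∣ k) :
    ((m + k).choose 2 : R) = (m.choose 2 : R) := by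
  have choose_two_modEq (n : ℕ) : n.choose 2 ≡ n / 2 [MOD 2] := by
    simpa using Choose.choose_modEq_choose_mod_mul_choose_div_nat (p := 2) (n := n) (k := 2)
  rw [CharP.natCast_eq_natCast R 2]
  refine (choose_two_modEq _).trans (.trans ?_ (choose_two_modEq m).symm)
  unfold Nat.ModEq
  omega

end BinomialCoefficients

section SymmetricForms
variable {σ R : Type*} [Fintype σ]

section CommSemiring
variable [CommSemiring R]

theorem isHomogeneous_esymm (n : ℕ) : (esymm σ R n).IsHomogeneous n := by
  refine IsHomogeneous.sum _ _ _ fun t ht => ?_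
  simpa [(mem_powersetCard.mp ht).2] using
    IsHomogeneous.prod t (fun i => (X i : MvPolynomial σ R)) (fun _ => 1)
      fun i _ => isHomogeneous_X R i

theorem isHomogeneous_prod_map_esymm (s : Multiset ℕ) :
    (s.map (esymm σ R)).prod.IsHomogeneous s.sum := by
  induction s using Multiset.induction with
  | empty => simpa using isHomogeneous_one σ R
  | cons i s ih => simpa using (isHomogeneous_esymm i).mul ih

theorem esymm_eq_zero_of_card_lt {n : ℕ} (h : Fintype.card σ < n) : esymm σ R n = 0 := by
  rw [esymm, powersetCard_eq_empty.mpr (by simpa using h), sum_empty]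

end CommSemiring

section CommRing
variable [CommRing R]

theorem mem_span_range_esymmPart_of_isSymmetric {p : MvPolynomial σ R} {n : ℕ}
    (hp : p.IsSymmetric) (hn : p.IsHomogeneous n) :
    p ∈ Submodule.span R (Set.range fun μ : n.Partition => esymmPart σ R μ) := by
  obtain ⟨q, hq⟩ := esymmAlgHom_surjective R (le_refl (Fintype.card σ)) ⟨p, hp⟩
  replace hq : aeval (fun i : Fin (Fintype.card σ) => esymm σ R (i + 1)) q = p := by
    simpa only [esymmAlgHom_apply] using congrArg Subtype.val hq
  rw [← homogeneousComponent_eq_self hn, ← hq]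
  clear hq hn hp p
  induction q using MvPolynomial.induction_on' with
  | add q q' hq hq' =>
    simp only [map_add]
    exact add_mem hq hq'
  | monomial m c =>
    let parts : Multiset ℕ := m.toMultiset.map fun i : Fin _ => (i : ℕ) + 1
    have hm : aeval (fun i : Fin (Fintype.card σ) => esymm σ R (i + 1)) (monomial m c) =
        c • (parts.map (esymm σ R)).prod := by
      rw [aeval_monomial, Multiset.map_map, Finsupp.toMultiset_map, Finsupp.prod_toMultiset,
        Finsupp.prod_mapDomain_index (by simp) (by simp [pow_add]), algebraMap_eq, smul_eq_C_mul]
      rfl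
    rw [hm, map_smul, homogeneousComponent_of_mem (isHomogeneous_prod_map_esymm parts)]
    split_ifs with hsum
    · refine Submodule.smul_mem _ c (Submodule.subset_span ⟨⟨parts, ?_, hsum.symm⟩, rfl⟩)
      simp [parts]
    · simp

theorem exists_sub_smul_esymm_mem_span {p : MvPolynomial σ R} {k : ℕ} (hk : 0 < k)
    (hp : p.IsSymmetric) (hn : p.IsHomogeneous (2 * k)) :
    ∃ a b : R, p - (a • esymm σ R (2 * k) + b • esymm σ R k ^ 2) ∈
      Ideal.span (esymm σ R '' Set.Ico 1 k) := by
  set I := Ideal.span (esymm σ R '' Set.Ico 1 k)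
  have hle : Submodule.span R (Set.range fun μ : (2 * k).Partition => esymmPart σ R μ) ≤
      I.restrictScalars R ⊔ Submodule.span R {esymm σ R (2 * k), esymm σ R k ^ 2} := by
    rw [Submodule.span_le]
    rintro _ ⟨μ, rfl⟩
    by_cases hμ : ∀ i ∈ μ.parts, k ≤ i
    · refine Submodule.mem_sup_right (Submodule.subset_span ?_)
      obtain h | h := partition_parts_eq_singleton_or_pair hk μ hμ <;> simp [esymmPart, h, sq]
    · push Not at hμ
      obtain ⟨i, hi, hik⟩ := hμ
      refine Submodule.mem_sup_left (I.mem_of_dvd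
        (Multiset.dvd_prod (Multiset.mem_map_of_mem _ hi)) (Ideal.subset_span ⟨i, ⟨?_, hik⟩, rfl⟩))
      exact μ.parts_pos hi
  obtain ⟨q, hq, z, hz, rfl⟩ :=
    Submodule.mem_sup.mp (hle (mem_span_range_esymmPart_of_isSymmetric hp hn))
  obtain ⟨a, b, rfl⟩ := Submodule.mem_span_pair.mp hz
  exact ⟨a, b, by rwa [add_sub_cancel_right]⟩

end CommRing

end SymmetricForms

section EvalAtIndicator
variable {σ R : Type*}

section CommSemiring
variable [CommSemiring R]

theorem coeff_aeval_C_mul_X (c : σ → R) (p : MvPolynomial σ R) (n : ℕ) :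
    (aeval (fun i => Polynomial.C (c i) * Polynomial.X) p).coeff n =
      aeval c (homogeneousComponent n p) := by
  induction p using MvPolynomial.induction_on' with
  | add p q hp hq => simp only [map_add, Polynomial.coeff_add, hp, hq]
  | monomial m r =>
    have hm : aeval (fun i => Polynomial.C (c i) * Polynomial.X) (monomial m r) =
        Polynomial.C (aeval c (monomial m r)) * Polynomial.X ^ m.degree := by
      simp [aeval_monomial, Finsupp.prod, mul_pow, prod_mul_distrib, prod_pow_eq_pow_sum,
        Finsupp.degree_apply, mul_assoc]
    rw [hm, Polynomial.coeff_C_mul_X_pow, homogeneousComponent_of_mem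
      (isHomogeneous_monomial r rfl)]
    split_ifs <;> simp

/-- Evaluation at the indicator vector of `S`: `t_i ↦ 1` for `i ∈ S` and `t_i ↦ 0` otherwise. -/
noncomputable def evalAtIndicator (S : Finset σ) : MvPolynomial σ R →ₐ[R] R :=
  aeval (Set.indicator (S : Set σ) 1)

theorem evalAtIndicator_esymm [Fintype σ] (S : Finset σ) (n : ℕ) :
    evalAtIndicator S (esymm σ R n) = ((#S).choose n : R) := by
  classical
  have hprod (t : Finset σ) :
      ∏ i ∈ t, Set.indicator (S : Set σ) (1 : σ → R) i = if t ⊆ S then 1 else 0 := by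
    simp only [Set.indicator_apply, Pi.one_apply, prod_boole, mem_coe, subset_iff]
    congr
  have hfilter : {t ∈ powersetCard n (univ : Finset σ) | t ⊆ S} = powersetCard n S := by
    ext t
    simp [mem_powersetCard, and_comm]
  simp only [evalAtIndicator, esymm, map_sum, map_prod, aeval_X, hprod, sum_boole, hfilter,
    card_powersetCard]

theorem evalAtIndicator_esymm_eq_zero [Fintype σ] {p r i : ℕ} [Fact p.Prime] [CharP R p]
    {S : Finset σ} (hS : #S = p ^ r) (h0 : i ≠ 0) (hi : i ≠ p ^ r) :
    evalAtIndicator S (esymm σ R i) = 0 := by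
  rw [evalAtIndicator_esymm, hS, CharP.cast_eq_zero_iff R p]
  exact (Fact.out : p.Prime).dvd_choose_pow h0 hi

theorem evalAtIndicator_esymm_card [Fintype σ] (S : Finset σ) :
    evalAtIndicator S (esymm σ R #S) = 1 := by
  rw [evalAtIndicator_esymm, Nat.choose_self, Nat.cast_one]

end CommSemiring

section CommRing
variable [Fintype σ] [CommRing R]

theorem evalAtIndicator_eq_of_sub_mem_span_esymm {p r k : ℕ} [Fact p.Prime] [CharP R p]
    {S : Finset σ} {f g : MvPolynomial σ R} (hS : #S = p ^ r) (hk : k ≤ p ^ r)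
    (h : f - g ∈ Ideal.span (esymm σ R '' Set.Ico 1 k)) :
    evalAtIndicator S f = evalAtIndicator S g := by
  have hker : Ideal.span (esymm σ R '' Set.Ico 1 k) ≤
      RingHom.ker (evalAtIndicator S : MvPolynomial σ R →ₐ[R] R) := by
    rw [Ideal.span_le]
    rintro _ ⟨i, ⟨hi, hik⟩, rfl⟩
    exact evalAtIndicator_esymm_eq_zero hS (by omega) (by omega)
  simpa only [RingHom.mem_ker, map_sub, sub_eq_zero] using hker h

variable [CharP R 2] {r : ℕ} {S : Finset σ} {f : MvPolynomial σ R} {a b : R}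

theorem coeff_esymm_eq_evalAtIndicator
    (h : f - (a • esymm σ R (2 ^ (r + 1)) + b • esymm σ R (2 ^ r) ^ 2) ∈
      Ideal.span (esymm σ R '' Set.Ico 1 (2 ^ r)))
    (hS : #S = 2 ^ (r + 1)) : a = evalAtIndicator S f := by
  have htop : evalAtIndicator S (esymm σ R (2 ^ (r + 1))) = 1 := by
    rw [← hS, evalAtIndicator_esymm_card]
  have hmid : evalAtIndicator S (esymm σ R (2 ^ r)) = 0 :=
    evalAtIndicator_esymm_eq_zero hS (by positivity) (by simp)
  have heval := evalAtIndicator_eq_of_sub_mem_span_esymm hS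
    (Nat.pow_le_pow_right two_pos r.le_succ) h
  rw [heval, map_add, map_smul, map_smul, map_pow, htop, hmid, zero_pow two_ne_zero, smul_zero,
    add_zero, smul_eq_mul, mul_one]

theorem coeff_esymm_sq_eq_evalAtIndicator
    (h : f - (a • esymm σ R (2 ^ (r + 1)) + b • esymm σ R (2 ^ r) ^ 2) ∈
      Ideal.span (esymm σ R '' Set.Ico 1 (2 ^ r)))
    (hS : #S = 2 ^ r) : b = evalAtIndicator S f := by
  have htop : evalAtIndicator S (esymm σ R (2 ^ (r + 1))) = 0 :=
    evalAtIndicator_esymm_eq_zero hS (by positivity) (by simp)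
  have hmid : evalAtIndicator S (esymm σ R (2 ^ r)) = 1 := by
    rw [← hS, evalAtIndicator_esymm_card]
  have heval := evalAtIndicator_eq_of_sub_mem_span_esymm hS le_rfl h
  rw [heval, map_add, map_smul, map_smul, map_pow, htop, hmid, smul_zero, zero_add, one_pow,
    smul_eq_mul, mul_one]

end CommRing

end EvalAtIndicator

section ExteriorSquare
variable {σ R : Type*} [Fintype σ] [LinearOrder σ]

theorem prod_lt_comp_perm {M : Type*} [CommMonoid M] (f : σ → σ → M) (hf : ∀ i j, f i j = f j i)
    (s : Equiv.Perm σ) :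
    ∏ p : σ × σ with p.1 < p.2, f (s p.1) (s p.2) = ∏ p : σ × σ with p.1 < p.2, f p.1 p.2 := by
  let sort (p : σ × σ) : σ × σ := if p.1 < p.2 then p else p.swap
  refine prod_nbij' (fun p => sort (s p.1, s p.2)) (fun p => sort (s.symm p.1, s.symm p.2))
    ?_ ?_ ?_ ?_ ?_
  all_goals
    grind [Prod.swap, EmbeddingLike.apply_eq_iff_eq, Equiv.symm_apply_apply,
      Equiv.apply_symm_apply]

theorem card_lt_separated (S : Finset σ) :
    #{p : σ × σ | p.1 < p.2 ∧ (p.1 ∈ S ↔ p.2 ∉ S)} = #S * #Sᶜ := by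
  rw [← card_product]
  refine card_nbij' (fun p => if p.1 ∈ S then p else p.swap)
    (fun p => if p.1 < p.2 then p else p.swap) ?_ ?_ ?_ ?_
  all_goals
    intro p hp
    rw [mem_coe] at *
    grind [Prod.swap, mem_compl]

variable (σ R) in
/-- The total Stiefel–Whitney class of the second exterior power of a real vector bundle with
Stiefel–Whitney roots `t_i`, by the splitting principle. The linear order on `σ` only serves to
list each unordered pair of roots once. -/
noncomputable def lambda2Class [CommSemiring R] : MvPolynomial σ R :=
  ∏ p : σ × σ with p.1 < p.2, (1 + X p.1 + X p.2)

theorem isSymmetric_lambda2Class [CommSemiring R] : (lambda2Class σ R).IsSymmetric := fun s => by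
  simpa only [lambda2Class, map_prod, map_add, map_one, rename_X] using
    prod_lt_comp_perm (fun i j => (1 + X i + X j : MvPolynomial σ R))
      (fun i j => add_right_comm _ _ _) s

section CharTwo
variable [CommRing R] [CharP R 2]

theorem aeval_lambda2Class (S : Finset σ) :
    aeval (fun i => Polynomial.C (Set.indicator (S : Set σ) (1 : σ → R) i) * Polynomial.X)
        (lambda2Class σ R) =
      (1 + Polynomial.X) ^ (#S * #Sᶜ) := by
  have hfactor (p : σ × σ) :
      aeval (fun i => Polynomial.C (Set.indicator (S : Set σ) (1 : σ → R) i) * Polynomial.X)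
          (1 + X p.1 + X p.2 : MvPolynomial σ R) =
        if p.1 ∈ S ↔ p.2 ∉ S then 1 + Polynomial.X else 1 := by
    by_cases h₁ : p.1 ∈ S <;> by_cases h₂ : p.2 ∈ S <;>
      simp [h₁, h₂, add_assoc, CharTwo.add_self_eq_zero]
  simp only [lambda2Class, map_prod, hfactor, ← prod_filter, filter_filter, prod_const,
    card_lt_separated]

theorem evalAtIndicator_homogeneousComponent_lambda2Class {r : ℕ} {S : Finset σ}
    (hS : #S = 2 ^ r) (j : ℕ) :
    evalAtIndicator S (homogeneousComponent (2 ^ r * j) (lambda2Class σ R)) =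
      ((#Sᶜ).choose j : R) := by
  rw [evalAtIndicator, ← coeff_aeval_C_mul_X, aeval_lambda2Class,
    Polynomial.coeff_one_add_X_pow, hS, cast_choose_pow_mul]

theorem evalAtIndicator_homogeneousComponent_card_lambda2Class {r : ℕ} {S : Finset σ}
    (hr : r ≠ 0) (hS : #S = 2 ^ r) :
    evalAtIndicator S (homogeneousComponent (2 ^ r) (lambda2Class σ R)) = (Fintype.card σ : R) := by
  have h := evalAtIndicator_homogeneousComponent_lambda2Class (R := R) hS 1
  rw [mul_one, Nat.choose_one_right] at h
  rw [h, ← card_compl_add_card S, hS, Nat.cast_add, Nat.cast_pow, Nat.cast_ofNat,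
    CharTwo.two_eq_zero, zero_pow hr, add_zero]

theorem evalAtIndicator_homogeneousComponent_two_mul_card_lambda2Class {r : ℕ} {S : Finset σ}
    (hr : 2 ≤ r) (hS : #S = 2 ^ r) :
    evalAtIndicator S (homogeneousComponent (2 ^ (r + 1)) (lambda2Class σ R)) =
      ((Fintype.card σ).choose 2 : R) := by
  rw [pow_succ, evalAtIndicator_homogeneousComponent_lambda2Class hS,
    ← cast_choose_two_add_of_four_dvd (#Sᶜ) (pow_dvd_pow 2 hr), ← hS, card_compl_add_card]

theorem lambda2_spin15_w8_general {r : ℕ} (hr : 2 ≤ r) :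
    homogeneousComponent (2 ^ (r + 1)) (lambda2Class σ R) -
        ((Fintype.card σ : R) • esymm σ R (2 ^ (r + 1)) +
          ((Fintype.card σ).choose 2 : R) • esymm σ R (2 ^ r) ^ 2) ∈
      Ideal.span (esymm σ R '' Set.Ico 1 (2 ^ r)) := by
  have hsymm : (homogeneousComponent (2 ^ (r + 1)) (lambda2Class σ R)).IsSymmetric := fun s => by
    rw [rename_homogeneousComponent, isSymmetric_lambda2Class s]
  obtain ⟨a, b, h⟩ := exists_sub_smul_esymm_mem_span (pow_pos two_pos r) hsymm
    (pow_succ' 2 r ▸ homogeneousComponent_isHomogeneous _ _)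
  rw [← pow_succ'] at h
  have ha : a • esymm σ R (2 ^ (r + 1)) = (Fintype.card σ : R) • esymm σ R (2 ^ (r + 1)) := by
    obtain hσ | hσ := lt_or_ge (Fintype.card σ) (2 ^ (r + 1))
    · simp only [esymm_eq_zero_of_card_lt hσ, smul_zero]
    · obtain ⟨S, -, hS⟩ := exists_subset_card_eq (s := univ) hσ
      rw [coeff_esymm_eq_evalAtIndicator h hS,
        evalAtIndicator_homogeneousComponent_card_lambda2Class r.succ_ne_zero hS]
  have hb : b • esymm σ R (2 ^ r) ^ 2 =
      ((Fintype.card σ).choose 2 : R) • esymm σ R (2 ^ r) ^ 2 := by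
    obtain hσ | hσ := lt_or_ge (Fintype.card σ) (2 ^ r)
    · simp only [esymm_eq_zero_of_card_lt hσ, zero_pow two_ne_zero, smul_zero]
    · obtain ⟨S, -, hS⟩ := exists_subset_card_eq (s := univ) hσ
      rw [coeff_esymm_sq_eq_evalAtIndicator h hS,
        evalAtIndicator_homogeneousComponent_two_mul_card_lambda2Class hr hS]
  rwa [ha, hb] at h

end CharTwo

end ExteriorSquare

/-- the degree-8 homogeneous component `P₈` of `P` is congruent to
`e₈ + e₄²` modulo the ideal `(e₁, e₂, e₃, e₅)`. -/
theorem lambda2_spin15_w8 :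
    homogeneousComponent 8 P - (e 8 + e 4 ^ 2) ∈ Ideal.span {e 1, e 2, e 3, e 5} := by
  have h := lambda2_spin15_w8_general (σ := Fin 15) (R := ZMod 2) le_rfl
  have hcard : (Fintype.card (Fin 15) : ZMod 2) = 1 := by decide
  have hchoose : ((Fintype.card (Fin 15)).choose 2 : ZMod 2) = 1 := by decide
  rw [hcard, hchoose, one_smul, one_smul] at h
  refine Ideal.span_mono ?_ h
  rintro _ ⟨i, ⟨hi, hi'⟩, rfl⟩
  interval_cases i <;> simp [e]
end

section
/- Let P = ∏_{1≤j<k≤15} (1 + t_j + t_k) in 𝔽₂[t₁,…,t₁₅], and let P₁₆ denote the homogeneous component of P of degree 16. Then P₁₆ is congruent to e₈² + e₄²e₈ + e₄e₆² modulo the ideal generated by e₁, e₂, e₃, e₅, e₉. -/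
open MvPolynomial Finset

/-! Read `e_j` as the Stiefel–Whitney class of degree `j` of a bundle of rank 15, so that `P` is the
total class of its second exterior power. For degree reasons only the `e_j` with `j ≤ 12` even
contribute to `P₁₆` modulo the ideal; they are the classes `b_i = e_{2i}` of a formal bundle of rank
6. In characteristic 2 the total class of `V ⊕ V` has `w_i(V)²` in degree `2i`, and
`w(λ²(V ⊕ V ⊕ ε³)) = w(V)⁶ w(λ²V)⁴`. As Frobenius is injective on polynomial rings over `𝔽₂`, taking
square roots gives `P ≡ c³ l²`, where `c = ∑ b_i` and `l` is the total class of the second exterior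
power with classes `b_i`. Since `e₂ ≡ 0`, the class `l` is `1` up to terms of degree at least 10,
whence `P ≡ c (c l)² ≡ c (1 + e₄² + e₆² + e₈²)` up to degree 19. -/

section Multiset

variable {A : Type*} [CommSemiring A]

theorem multiset_esymm_zero (s : Multiset A) : s.esymm 0 = 1 := by
  simp [Multiset.esymm]

theorem multiset_esymm_eq_zero_of_card_lt {s : Multiset A} {k : ℕ} (h : s.card < k) :
    s.esymm k = 0 := by
  simp [Multiset.esymm, Multiset.powersetCard_eq_empty k h]

theorem multiset_esymm_cons (a : A) (s : Multiset A) (k : ℕ) :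
    (a ::ₘ s).esymm (k + 1) = s.esymm (k + 1) + a * s.esymm k := by
  simp [Multiset.esymm, Multiset.powersetCard_cons, Multiset.sum_map_mul_left]

theorem prod_one_add_eq_sum_multiset_esymm (s : Multiset A) :
    (s.map (1 + ·)).prod = ∑ j ∈ range (s.card + 1), s.esymm j := by
  have h := congrArg (Polynomial.eval 1) s.prod_X_add_C_eq_sum_esymm
  simpa [Polynomial.eval_multiset_prod, Polynomial.eval_finsetSum] using h

theorem multiset_esymm_add_replicate_zero (s : Multiset A) (k j : ℕ) :
    (s + Multiset.replicate k 0).esymm j = s.esymm j := by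
  induction k with
  | zero => simp
  | succ k ih =>
    cases j with
    | zero => simp only [multiset_esymm_zero]
    | succ j =>
      rw [Multiset.replicate_succ, Multiset.add_cons, multiset_esymm_cons, zero_mul, add_zero, ih]

/-- The product of `1 + a + b` over the pairs of entries of `s`. If `s` consists of the Chern roots
of a vector bundle, this is the total characteristic class of its second exterior power. -/
def pairSumProd (s : Multiset A) : A :=
  ((s.powersetCard 2).map fun t => 1 + t.sum).prod

theorem pairSumProd_zero : pairSumProd (0 : Multiset A) = 1 := by
  rw [pairSumProd, Multiset.powersetCard_eq_empty 2 (by simp), Multiset.map_zero,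
    Multiset.prod_zero]

theorem pairSumProd_cons (a : A) (s : Multiset A) :
    pairSumProd (a ::ₘ s) = (s.map (1 + a + ·)).prod * pairSumProd s := by
  simp [pairSumProd, Multiset.powersetCard_cons, Multiset.powersetCard_one, add_assoc, mul_comm]

theorem map_pairSumProd {B F : Type*} [CommSemiring B] [FunLike F A B] [RingHomClass F A B]
    (f : F) (s : Multiset A) : f (pairSumProd s) = pairSumProd (s.map f) := by
  simp [pairSumProd, map_multiset_prod, Multiset.powersetCard_map, map_multiset_sum]

theorem pairSumProd_add_replicate_zero (s : Multiset A) (k : ℕ) :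
    pairSumProd (s + Multiset.replicate k 0) = (s.map (1 + ·)).prod ^ k * pairSumProd s := by
  induction k with
  | zero => simp
  | succ k ih =>
    rw [Multiset.replicate_succ, Multiset.add_cons, pairSumProd_cons, ih]
    simp only [add_zero, Multiset.map_add, Multiset.map_replicate, Multiset.prod_add,
      Multiset.prod_replicate, one_pow, mul_one]
    ring

theorem pairSumProd_map_univ {n : ℕ} (x : Fin n → A) :
    pairSumProd (univ.val.map x) = ∏ i, ∏ j ∈ Ioi i, (1 + x i + x j) := by
  induction n with
  | zero => simp [pairSumProd_zero]
  | succ n ih =>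
    have hcons : (univ.val.map x : Multiset A) = x 0 ::ₘ univ.val.map (x ∘ Fin.succ) := by
      simp [Fin.univ_succ, Function.comp_def]
    rw [hcons, pairSumProd_cons, ih, Fin.prod_univ_succ, Fin.prod_Ioi_zero]
    simp_rw [Fin.prod_Ioi_succ]
    simp only [Multiset.map_map, Function.comp_def, Finset.prod]

end Multiset

section CharTwo

variable {A : Type*} [CommSemiring A] [CharP A 2]

theorem multiset_esymm_cons_cons_self (a : A) (s : Multiset A) (k : ℕ) :
    (a ::ₘ a ::ₘ s).esymm (k + 2) = s.esymm (k + 2) + a ^ 2 * s.esymm k := by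
  calc (a ::ₘ a ::ₘ s).esymm (k + 2)
      = s.esymm (k + 2) + (a * s.esymm (k + 1) + a * s.esymm (k + 1)) + a ^ 2 * s.esymm k := by
        simp only [multiset_esymm_cons]; ring
    _ = s.esymm (k + 2) + a ^ 2 * s.esymm k := by rw [CharTwo.add_self_eq_zero, add_zero]

theorem multiset_esymm_add_self_two_mul (s : Multiset A) (j : ℕ) :
    (s + s).esymm (2 * j) = s.esymm j ^ 2 := by
  induction s using Multiset.induction_on generalizing j with
  | empty =>
    cases j with
    | zero => simp [multiset_esymm_zero]
    | succ j =>
      rw [add_zero, multiset_esymm_eq_zero_of_card_lt (by simp),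
        multiset_esymm_eq_zero_of_card_lt (by simp), zero_pow two_ne_zero]
  | cons a s ih =>
    rw [Multiset.cons_add, Multiset.add_cons]
    cases j with
    | zero => simp [multiset_esymm_zero]
    | succ j =>
      rw [mul_add_one, multiset_esymm_cons_cons_self, ← mul_add_one, ih, ih, multiset_esymm_cons,
        CharTwo.add_sq, mul_pow]

theorem multiset_esymm_add_self_two_mul_add_one (s : Multiset A) (j : ℕ) :
    (s + s).esymm (2 * j + 1) = 0 := by
  induction s using Multiset.induction_on generalizing j with
  | empty => exact multiset_esymm_eq_zero_of_card_lt (by simp)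
  | cons a s ih =>
    rw [Multiset.cons_add, Multiset.add_cons]
    cases j with
    | zero =>
      have h := ih 0
      simp only [mul_zero, zero_add] at h
      rw [multiset_esymm_cons, multiset_esymm_cons, multiset_esymm_zero, multiset_esymm_zero, h,
        zero_add, CharTwo.add_self_eq_zero]
    | succ j =>
      rw [show 2 * (j + 1) + 1 = 2 * j + 1 + 2 by ring, multiset_esymm_cons_cons_self, ih j,
        show 2 * j + 1 + 2 = 2 * (j + 1) + 1 by ring, ih, mul_zero, add_zero]

theorem pairSumProd_add_self (s : Multiset A) : pairSumProd (s + s) = pairSumProd s ^ 4 := by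
  induction s using Multiset.induction_on with
  | empty => simp [pairSumProd_zero]
  | cons a s ih =>
    rw [Multiset.cons_add, Multiset.add_cons]
    simp only [pairSumProd_cons, ih, Multiset.map_cons, Multiset.map_add, Multiset.prod_cons,
      Multiset.prod_add, add_assoc, CharTwo.add_self_eq_zero, add_zero, one_mul]
    ring

end CharTwo

section LambdaTwo

theorem isSymmetric_pairSumProd_map_X (σ R : Type*) [Fintype σ] [CommSemiring R] :
    (pairSumProd (univ.val.map (X : σ → MvPolynomial σ R))).IsSymmetric := by
  intro e
  rw [map_pairSumProd, Multiset.map_map]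
  conv_rhs => rw [← Multiset.map_univ_val_equiv e, Multiset.map_map]
  simp only [Function.comp_def, rename_X]

/-- The polynomial with integer coefficients that expresses the total characteristic class of the
second exterior power of a bundle of rank `n` through its characteristic classes: the variable `X i`
stands for the class of degree `i + 1`. -/
noncomputable def lambdaTwoPoly (n : ℕ) : MvPolynomial (Fin n) ℤ :=
  (esymmAlgEquiv (Fin n) ℤ (Fintype.card_fin n)).symm
    ⟨pairSumProd (univ.val.map X), isSymmetric_pairSumProd_map_X _ _⟩

theorem aeval_esymm_lambdaTwoPoly (n : ℕ) :
    aeval (fun i : Fin n => esymm (Fin n) ℤ (i + 1)) (lambdaTwoPoly n) =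
      pairSumProd (univ.val.map X) := by
  rw [← esymmAlgHom_apply]
  exact congrArg Subtype.val
    ((esymmAlgEquiv (Fin n) ℤ (Fintype.card_fin n)).apply_symm_apply _)

variable {A : Type*} [CommRing A]

/-- The total class of the second exterior power of a bundle of rank `n` whose characteristic class
of degree `j` is `a j`. Only `a 1, …, a n` enter; in particular `a 0 = 1` is not built in. -/
noncomputable def lambdaTwo (n : ℕ) (a : ℕ → A) : A :=
  aeval (fun i : Fin n => a (i + 1)) (lambdaTwoPoly n)

theorem map_lambdaTwo {B F : Type*} [CommRing B] [FunLike F A B] [RingHomClass F A B] (f : F)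
    (n : ℕ) (a : ℕ → A) : f (lambdaTwo n a) = lambdaTwo n fun j => f (a j) :=
  comp_aeval_apply (fun i : Fin n => a (i + 1)) (RingHom.toIntAlgHom (f : A →+* B)) _

theorem lambdaTwo_esymm {n : ℕ} {s : Multiset A} (hs : s.card = n) :
    lambdaTwo n s.esymm = pairSumProd s := by
  obtain ⟨x, rfl⟩ : ∃ x : Fin n → A, s = univ.val.map x := by
    obtain ⟨l, rfl⟩ : ∃ l : List A, s = l := ⟨s.toList, s.coe_toList.symm⟩
    rw [Multiset.coe_card] at hs
    subst hs
    exact ⟨l.get, by rw [Fin.univ_val_map, List.ofFn_get]⟩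
  have h := congrArg (aeval x) (aeval_esymm_lambdaTwoPoly n)
  rw [comp_aeval_apply, map_pairSumProd, Multiset.map_map] at h
  simpa [lambdaTwo, aeval_esymm_eq_multiset_esymm, Function.comp_def] using h

-- The splitting principle: `ι` turns the generic classes `u` into elementary symmetric functions of
-- the roots `s`, and being injective it reflects identities, which `φ` then specializes to `a`.
theorem exists_splitting (R : Type*) [CommRing R] [Algebra R A] (n : ℕ) {a : ℕ → A} (h0 : a 0 = 1)
    (ha : ∀ j, n < j → a j = 0) :
    ∃ (u : ℕ → MvPolynomial (Fin n) R) (φ : MvPolynomial (Fin n) R →ₐ[R] A)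
      (ι : MvPolynomial (Fin n) R →ₐ[R] MvPolynomial (Fin n) R)
      (s : Multiset (MvPolynomial (Fin n) R)),
      Function.Injective ι ∧ s.card = n ∧ (∀ j, φ (u j) = a j) ∧ ∀ j, ι (u j) = s.esymm j := by
  refine ⟨fun | 0 => 1 | j + 1 => if h : j < n then X ⟨j, h⟩ else 0,
    aeval fun i => a (i + 1), aeval fun i => esymm (Fin n) R (i + 1), univ.val.map X, ?_, by simp,
    ?_, ?_⟩
  · have h := Subtype.val_injective.comp (esymmAlgHom_fin_injective R le_rfl (n := n) (m := n))
    intro p q hpq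
    exact h (by simpa [esymmAlgHom_apply] using hpq)
  · rintro (_ | j)
    · simp [h0]
    · by_cases h : j < n
      · simp [h]
      · simp [h, ha (j + 1) (by omega)]
  · rintro (_ | j)
    · simp [multiset_esymm_zero]
    · by_cases h : j < n
      · simp [h, esymm_eq_multiset_esymm]
      · rw [multiset_esymm_eq_zero_of_card_lt (by simpa using Nat.lt_succ_of_le (not_lt.mp h))]
        simp [h]

end LambdaTwo

section Identities

variable {A : Type*} [CommRing A]

theorem lambdaTwo_add (m k : ℕ) {a : ℕ → A} (h0 : a 0 = 1) (ha : ∀ j, m < j → a j = 0) :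
    lambdaTwo (m + k) a = (∑ j ∈ range (m + 1), a j) ^ k * lambdaTwo m a := by
  obtain ⟨u, φ, ι, s, hι, hs, hφ, hu⟩ := exists_splitting ℤ m h0 ha
  have hroots : (s + Multiset.replicate k 0).card = m + k := by simp [hs]
  have hu' : (fun j => ι (u j)) = s.esymm := funext hu
  have universal : lambdaTwo (m + k) u = (∑ j ∈ range (m + 1), u j) ^ k * lambdaTwo m u := by
    apply hι
    have hsum : (s.map (1 + ·)).prod = ∑ j ∈ range (m + 1), s.esymm j := by
      rw [prod_one_add_eq_sum_multiset_esymm, hs]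
    rw [map_mul, map_pow, map_sum, map_lambdaTwo, map_lambdaTwo, hu', lambdaTwo_esymm hs,
      ← hsum, ← pairSumProd_add_replicate_zero, ← lambdaTwo_esymm hroots]
    exact congrArg _ (funext fun j => (multiset_esymm_add_replicate_zero s k j).symm)
  simpa [map_lambdaTwo, hφ] using congrArg φ universal

theorem lambdaTwo_two_mul_add [Algebra (ZMod 2) A] (m k : ℕ) {a b : ℕ → A} (h0 : b 0 = 1)
    (hb : ∀ j, m < j → b j = 0) (ha : ∀ j, a j = if Even j then b (j / 2) else 0) :
    lambdaTwo (2 * m + k) a = (∑ j ∈ range (m + 1), b j) ^ k * lambdaTwo m b ^ 2 := by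
  obtain ⟨u, φ, ι, s, hι, hs, hφ, hu⟩ := exists_splitting (ZMod 2) m h0 hb
  have hroots : (s + s + Multiset.replicate k 0).card = 2 * m + k := by simp [hs, two_mul]
  have hu' : (fun j => ι (u j)) = s.esymm := funext hu
  have universal : lambdaTwo (2 * m + k) (fun j => if Even j then u (j / 2) else 0) =
      (∑ j ∈ range (m + 1), u j) ^ k * lambdaTwo m u ^ 2 := by
    apply hι
    apply frobenius_inj _ 2
    have hesymm : (fun j => frobenius _ 2 (ι (if Even j then u (j / 2) else 0))) =
        (s + s + Multiset.replicate k 0).esymm := by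
      funext j
      rw [multiset_esymm_add_replicate_zero]
      obtain ⟨i, rfl | rfl⟩ := j.even_or_odd'
      · simp [multiset_esymm_add_self_two_mul, hu, frobenius_def]
      · simp [multiset_esymm_add_self_two_mul_add_one, frobenius_def]
    rw [map_lambdaTwo, map_lambdaTwo, hesymm, lambdaTwo_esymm hroots,
      pairSumProd_add_replicate_zero, pairSumProd_add_self, Multiset.map_add, Multiset.prod_add,
      prod_one_add_eq_sum_multiset_esymm, hs, map_mul, map_pow, map_pow, map_sum, map_lambdaTwo,
      hu', lambdaTwo_esymm hs, frobenius_def]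
    ring
  simpa [map_lambdaTwo, hφ, apply_ite φ, ← ha] using congrArg φ universal

-- The sums of two roots form complementary pairs `α`, `a₁ - α`, so the right-hand side is, up to
-- sign, the cubic resolvent with roots `α (a₁ - α)` evaluated at `-(1 + a₁)`.
theorem lambdaTwo_four {a : ℕ → A} (h0 : a 0 = 1) (ha : ∀ j, 4 < j → a j = 0) :
    lambdaTwo 4 a = (1 + a 1) ^ 3 + 2 * a 2 * (1 + a 1) ^ 2 +
      (a 2 ^ 2 + a 1 * a 3 - 4 * a 4) * (1 + a 1) +
      (a 1 * a 2 * a 3 - a 1 ^ 2 * a 4 - a 3 ^ 2) := by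
  obtain ⟨u, φ, ι, s, hι, hs, hφ, hu⟩ := exists_splitting ℤ 4 h0 ha
  have hu' : (fun j => ι (u j)) = s.esymm := funext hu
  have universal : lambdaTwo 4 u = (1 + u 1) ^ 3 + 2 * u 2 * (1 + u 1) ^ 2 +
      (u 2 ^ 2 + u 1 * u 3 - 4 * u 4) * (1 + u 1) +
      (u 1 * u 2 * u 3 - u 1 ^ 2 * u 4 - u 3 ^ 2) := by
    apply hι
    rw [map_lambdaTwo, hu', lambdaTwo_esymm hs]
    obtain ⟨x, y, z, w, rfl⟩ := Multiset.card_eq_four.mp hs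
    simp only [map_add, map_sub, map_mul, map_pow, map_one, map_ofNat, hu]
    simp only [Multiset.insert_eq_cons, ← Multiset.cons_zero, pairSumProd_cons, pairSumProd_zero,
      Multiset.map_cons, Multiset.map_zero, Multiset.prod_cons, Multiset.prod_zero]
    have hzero (k : ℕ) : (0 : Multiset (MvPolynomial (Fin 4) ℤ)).esymm (k + 1) = 0 :=
      multiset_esymm_eq_zero_of_card_lt (by simp)
    simp only [multiset_esymm_cons _ _ 0, multiset_esymm_cons _ _ 1, multiset_esymm_cons _ _ 2,
      multiset_esymm_cons _ _ 3, multiset_esymm_zero, hzero]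
    ring
  simpa [map_lambdaTwo, hφ, map_ofNat] using congrArg φ universal

end Identities

section ModTwo

variable {A : Type*} [CommRing A] [Algebra (ZMod 2) A]

theorem two_eq_zero_of_algebra_zmod_two : (2 : A) = 0 := by
  rw [← map_ofNat (algebraMap (ZMod 2) A) 2]
  exact map_zero _

theorem add_sq_of_algebra_zmod_two (x y : A) : (x + y) ^ 2 = x ^ 2 + y ^ 2 := by
  linear_combination x * y * two_eq_zero_of_algebra_zmod_two (A := A)

theorem lambdaTwo_six_eq_one {a : ℕ → A} (h0 : a 0 = 1) (h1 : a 1 = 0) (h2 : a 2 ^ 4 = 0)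
    (h3 : a 3 ^ 4 = 0) (h4 : a 4 ^ 2 = 0) (ha : ∀ j, 4 < j → a j = 0) : lambdaTwo 6 a = 1 := by
  have htwo : (2 : A) = 0 := two_eq_zero_of_algebra_zmod_two
  have hfour : lambdaTwo 4 a = 1 + a 2 ^ 2 + a 3 ^ 2 := by
    rw [lambdaTwo_four h0 ha, h1]
    linear_combination (a 2 - 2 * a 4 - a 3 ^ 2) * htwo
  have hsq : (1 + a 2 + a 3 + a 4) ^ 2 = 1 + a 2 ^ 2 + a 3 ^ 2 + a 4 ^ 2 := by
    simp only [add_sq_of_algebra_zmod_two, one_pow]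
  calc lambdaTwo 6 a
      = (1 + a 2 + a 3 + a 4) ^ 2 * lambdaTwo 4 a := by
        simp [lambdaTwo_add 4 2 h0 ha, sum_range_succ, h0, h1]
    _ = 1 := by
        rw [hsq, hfour]
        linear_combination h2 + h3 + (1 + a 2 ^ 2 + a 3 ^ 2) * h4 +
          (a 2 ^ 2 + a 3 ^ 2 + a 2 ^ 2 * a 3 ^ 2) * htwo

theorem dvd_lambdaTwo_six_sub_one {d : A} {a : ℕ → A} (h0 : a 0 = 1) (h1 : a 1 = 0)
    (h2 : d ∣ a 2 ^ 4) (h3 : d ∣ a 3 ^ 4) (h4 : d ∣ a 4 ^ 2) (ha : ∀ j, 4 < j → d ∣ a j) :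
    d ∣ lambdaTwo 6 a - 1 := by
  simp only [← Ideal.Quotient.eq_zero_iff_dvd, map_sub, map_one, map_pow] at *
  rw [map_lambdaTwo, lambdaTwo_six_eq_one (by rw [h0, map_one]) (by rw [h1, map_zero]) h2 h3 h4 ha,
    sub_self]

end ModTwo

section Grading

variable {σ R S : Type*} [CommSemiring R] [CommSemiring S] [Algebra R S]

theorem coeff_aeval_C_mul_X_pow (w : σ → ℕ) (x : σ → S) (p : MvPolynomial σ R) (d : ℕ) :
    (aeval (fun i => Polynomial.C (x i) * Polynomial.X ^ w i) p).coeff d =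
      aeval x (weightedHomogeneousComponent w d p) := by
  induction p using MvPolynomial.induction_on' with
  | monomial m r =>
    have hprod : (m.prod fun i k => (Polynomial.C (x i) * Polynomial.X ^ w i) ^ k) =
        Polynomial.C (m.prod fun i k => x i ^ k) * Polynomial.X ^ Finsupp.weight w m := by
      simp only [Finsupp.prod, mul_pow, prod_mul_distrib, ← map_pow, ← map_prod, ← pow_mul,
        prod_pow_eq_pow_sum, Finsupp.weight_apply, Finsupp.sum, smul_eq_mul, mul_comm]
    rw [weightedHomogeneousComponent_of_mem (isWeightedHomogeneous_monomial w m r rfl),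
      aeval_monomial, hprod, ← Algebra.smul_def, Polynomial.coeff_smul,
      Polynomial.coeff_C_mul_X_pow, Algebra.smul_def, mul_ite, mul_zero, apply_ite (aeval x),
      aeval_monomial, map_zero]
  | add p q hp hq => simp only [map_add, Polynomial.coeff_add, hp, hq]

theorem aeval_congr_of_isWeightedHomogeneous {w : σ → ℕ} {p : MvPolynomial σ R} {d : ℕ}
    (hp : p.IsWeightedHomogeneous w d) {x y : σ → S}
    (h : ∀ m : σ →₀ ℕ, Finsupp.weight w m = d →
      (m.prod fun i k => x i ^ k) = m.prod fun i k => y i ^ k) :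
    aeval x p = aeval y p := by
  simp only [aeval_def, eval₂_eq]
  exact sum_congr rfl fun m hm => congrArg _ (h m (hp (mem_support_iff.mp hm)))

end Grading

section LambdaTwoGrading

variable {A : Type*} [CommRing A]

theorem coeff_lambdaTwo_congr {n d : ℕ} {a b : ℕ → A}
    (h : ∀ m : Fin n →₀ ℕ, Finsupp.weight (fun i : Fin n => (i : ℕ) + 1) m = d →
      (m.prod fun i k => a (i + 1) ^ k) = m.prod fun i k => b (i + 1) ^ k) :
    (lambdaTwo n fun j => Polynomial.C (a j) * Polynomial.X ^ j).coeff d =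
      (lambdaTwo n fun j => Polynomial.C (b j) * Polynomial.X ^ j).coeff d := by
  have hcoeff (x : ℕ → A) : (lambdaTwo n fun j => Polynomial.C (x j) * Polynomial.X ^ j).coeff d =
      aeval (fun i : Fin n => x (i + 1)) (weightedHomogeneousComponent
        (fun i : Fin n => (i : ℕ) + 1) d (lambdaTwoPoly n)) := by
    rw [← coeff_aeval_C_mul_X_pow, lambdaTwo]
    congr!
  rw [hcoeff, hcoeff]
  exact aeval_congr_of_isWeightedHomogeneous
    (weightedHomogeneousComponent_isWeightedHomogeneous d _) h

theorem homogeneousComponent_pairSumProd (n d : ℕ) (R : Type*) [CommRing R] :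
    homogeneousComponent d (pairSumProd (univ.val.map (X : Fin n → MvPolynomial (Fin n) R))) =
      (lambdaTwo n fun j => Polynomial.C (esymm (Fin n) R j) * Polynomial.X ^ j).coeff d := by
  have hesymm (j : ℕ) :
      (univ.val.map fun i : Fin n => (Polynomial.C (X i) * Polynomial.X ^ 1 :
        Polynomial (MvPolynomial (Fin n) R))).esymm j =
        Polynomial.C (esymm (Fin n) R j) * Polynomial.X ^ j := by
    rw [Finset.esymm_map_val, esymm, map_sum, sum_mul]
    refine sum_congr rfl fun s hs => ?_
    rw [prod_mul_distrib, prod_const, (mem_powersetCard.mp hs).2, pow_one, map_prod]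
  calc homogeneousComponent d (pairSumProd (univ.val.map (X : Fin n → MvPolynomial (Fin n) R)))
      = (aeval (fun i => Polynomial.C (X i) * Polynomial.X ^ 1)
          (pairSumProd (univ.val.map (X : Fin n → MvPolynomial (Fin n) R)))).coeff d := by
        rw [homogeneousComponent, ← aeval_X_left_apply (weightedHomogeneousComponent _ _ _)]
        exact (coeff_aeval_C_mul_X_pow 1 X _ d).symm
    _ = _ := by
        simp only [map_pairSumProd, Multiset.map_map, Function.comp_def, aeval_X, ← hesymm]
        rw [← lambdaTwo_esymm (n := n) (by simp)]

end LambdaTwoGrading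

section Main

variable {A : Type*} [CommRing A] [Algebra (ZMod 2) A]

theorem sq_dvd_lambdaTwo_fifteen_sub {d : A} {a b : ℕ → A} (h0 : b 0 = 1) (h1 : b 1 = 0)
    (h2 : d ∣ b 2 ^ 4) (h3 : d ∣ b 3 ^ 4) (h4 : d ∣ b 4 ^ 2) (h5 : d ∣ b 5) (h6 : d ∣ b 6)
    (hb : ∀ j, 6 < j → b j = 0) (ha : ∀ j, a j = if Even j then b (j / 2) else 0) :
    d ^ 2 ∣ lambdaTwo 15 a -
      (∑ j ∈ range 7, b j) * (1 + b 2 ^ 2 + b 3 ^ 2 + b 4 ^ 2) := by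
  have htail (j : ℕ) (hj : 4 < j) : d ∣ b j := by
    obtain rfl | rfl | hj : j = 5 ∨ j = 6 ∨ 6 < j := by omega
    exacts [h5, h6, hb j hj ▸ dvd_zero d]
  have hroot : d ∣ (∑ j ∈ range 7, b j) * lambdaTwo 6 b - (1 + b 2 + b 3 + b 4) := by
    have h := ((dvd_lambdaTwo_six_sub_one h0 h1 h2 h3 h4 htail).mul_left (∑ j ∈ range 7, b j)).add
      (h5.add h6)
    convert h using 1
    simp only [sum_range_succ, range_zero, sum_empty, h0, h1]
    ring
  convert (pow_dvd_pow_of_dvd hroot 2).mul_left (∑ j ∈ range 7, b j) using 1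
  rw [lambdaTwo_two_mul_add 6 3 h0 hb ha, sub_eq_add_neg _ (1 + b 2 + b 3 + b 4)]
  simp only [add_sq_of_algebra_zmod_two, neg_sq, one_pow]
  linear_combination (-(∑ j ∈ range 7, b j) * (1 + b 2 ^ 2 + b 3 ^ 2 + b 4 ^ 2)) *
    two_eq_zero_of_algebra_zmod_two (A := A)

theorem coeff_lambdaTwo_fifteen_of_even {a : ℕ → A} (h0 : a 0 = 1) (h2 : a 2 = 0)
    (hodd : ∀ j, Odd j → a j = 0) (ha : ∀ j, 12 < j → a j = 0) :
    (lambdaTwo 15 fun j => Polynomial.C (a j) * Polynomial.X ^ j).coeff 16 =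
      a 8 ^ 2 + a 4 ^ 2 * a 8 + a 4 * a 6 ^ 2 := by
  let b (j : ℕ) : Polynomial A := Polynomial.C (a (2 * j)) * Polynomial.X ^ (2 * j)
  have hdvd (j k : ℕ) (h : 10 ≤ 2 * j * k) : Polynomial.X ^ 10 ∣ b j ^ k := by
    rw [mul_pow, ← pow_mul]
    exact (pow_dvd_pow _ h).mul_left _
  have hspread (j : ℕ) : Polynomial.C (a j) * Polynomial.X ^ j =
      if Even j then b (j / 2) else 0 := by
    split_ifs with hj
    · simp only [b, Nat.two_mul_div_two_of_even hj]
    · rw [hodd j (Nat.not_even_iff_odd.mp hj), map_zero, zero_mul]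
  have hsub := sq_dvd_lambdaTwo_fifteen_sub (by simp [b, h0]) (by simp [b, h2])
    (hdvd 2 4 (by norm_num)) (hdvd 3 4 (by norm_num)) (hdvd 4 2 (by norm_num))
    (by simpa using hdvd 5 1 (by norm_num)) (by simpa using hdvd 6 1 (by norm_num))
    (fun j hj => by simp [b, ha (2 * j) (by omega)]) hspread
  rw [← pow_mul, Polynomial.X_pow_dvd_iff] at hsub
  rw [sub_eq_zero.mp ((Polynomial.coeff_sub _ _ _).symm.trans (hsub 16 (by norm_num)))]
  let c := ∑ j ∈ range 7, b j
  have hc (k : ℕ) (hk : Even k) : c.coeff k = a k := by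
    obtain ⟨j, rfl⟩ := even_iff_two_dvd.mp hk
    simp only [c, b, Polynomial.finsetSum_coeff, Polynomial.coeff_C_mul_X_pow,
      mul_right_inj' two_ne_zero, sum_ite_eq, mem_range]
    exact ite_eq_left_iff.mpr fun hj => (ha (2 * j) (by omega)).symm
  calc (c * (1 + b 2 ^ 2 + b 3 ^ 2 + b 4 ^ 2)).coeff 16
      = c.coeff 16 + c.coeff 8 * a 4 ^ 2 + c.coeff 4 * a 6 ^ 2 + c.coeff 0 * a 8 ^ 2 := by
        simp only [b, mul_pow, ← pow_mul, ← map_pow, mul_add, ← mul_assoc, mul_one,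
          Polynomial.coeff_add, Polynomial.coeff_mul_X_pow', Polynomial.coeff_mul_C]
        norm_num
    _ = a 8 ^ 2 + a 4 ^ 2 * a 8 + a 4 * a 6 ^ 2 := by
        rw [hc 16 (by decide), hc 8 (by decide), hc 4 (by decide), hc 0 (by decide), h0,
          ha 16 (by norm_num)]
        ring

theorem even_and_le_twelve_of_weight_eq_sixteen {m : Fin 15 →₀ ℕ}
    (hm : Finsupp.weight (fun i : Fin 15 => (i : ℕ) + 1) m = 16) (h1 : m 0 = 0) (h2 : m 1 = 0)
    (h3 : m 2 = 0) (h5 : m 4 = 0) (h9 : m 8 = 0) {i : Fin 15} (hi : m i ≠ 0) :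
    Even ((i : ℕ) + 1) ∧ (i : ℕ) + 1 ≤ 12 := by
  have hsum : m 3 * 4 + m 5 * 6 + m 6 * 7 + m 7 * 8 + m 9 * 10 + m 10 * 11 + m 11 * 12 +
      m 12 * 13 + m 13 * 14 + m 14 * 15 = 16 := by
    simpa [Finsupp.weight_eq_sum, Fin.sum_univ_castSucc, h1, h2, h3, h5, h9] using hm
  have hbad : m 6 = 0 ∧ m 10 = 0 ∧ m 12 = 0 ∧ m 13 = 0 ∧ m 14 = 0 := by lia
  fin_cases i <;> simp_all [Nat.even_iff]

theorem coeff_lambdaTwo_fifteen {a : ℕ → A} (h0 : a 0 = 1) (h1 : a 1 = 0) (h2 : a 2 = 0)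
    (h3 : a 3 = 0) (h5 : a 5 = 0) (h9 : a 9 = 0) :
    (lambdaTwo 15 fun j => Polynomial.C (a j) * Polynomial.X ^ j).coeff 16 =
      a 8 ^ 2 + a 4 ^ 2 * a 8 + a 4 * a 6 ^ 2 := by
  let b (j : ℕ) : A := if Even j ∧ j ≤ 12 then a j else 0
  have hb : (lambdaTwo 15 fun j => Polynomial.C (b j) * Polynomial.X ^ j).coeff 16 =
      b 8 ^ 2 + b 4 ^ 2 * b 8 + b 4 * b 6 ^ 2 := by
    apply coeff_lambdaTwo_fifteen_of_even
    · simp [b, h0]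
    · simp [b, h2]
    · intro j hj
      simp [b, Nat.not_even_iff_odd.mpr hj]
    · intro j hj
      simp [b, hj.not_ge]
  have hval : b 4 = a 4 ∧ b 6 = a 6 ∧ b 8 = a 8 := by simp [b, Nat.even_iff]
  rw [hval.1, hval.2.1, hval.2.2] at hb
  rw [← hb]
  refine coeff_lambdaTwo_congr fun m hm => ?_
  simp only [Finsupp.prod_fintype, pow_zero, implies_true]
  by_cases hzero : ∃ i, m i ≠ 0 ∧ a (i + 1) = 0
  · obtain ⟨i, hmi, hai⟩ := hzero
    have hbi : b (i + 1) = 0 := by simp [b, hai]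
    rw [prod_eq_zero (mem_univ i) (by rw [hai, zero_pow hmi]),
      prod_eq_zero (mem_univ i) (by rw [hbi, zero_pow hmi])]
  · have hm0 (i : Fin 15) (hi : a (i + 1) = 0) : m i = 0 := by
      by_contra hmi
      exact hzero ⟨i, hmi, hi⟩
    refine prod_congr rfl fun i _ => ?_
    by_cases hmi : m i = 0
    · rw [hmi, pow_zero, pow_zero]
    · have hparts := even_and_le_twelve_of_weight_eq_sixteen hm (hm0 0 h1) (hm0 1 h2) (hm0 2 h3)
        (hm0 4 h5) (hm0 8 h9) hmi
      simp only [b, hparts, and_self, if_true]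

end Main

/-- the degree-16 homogeneous component `P₁₆` of `P` is congruent to
`e₈² + e₄²e₈ + e₄e₆²` modulo the ideal `(e₁, e₂, e₃, e₅, e₉)`. -/
theorem lambda2_spin15_w16 :
    homogeneousComponent 16 P - (e 8 ^ 2 + e 4 ^ 2 * e 8 + e 4 * e 6 ^ 2)
      ∈ Ideal.span {e 1, e 2, e 3, e 5, e 9} := by
  let I := Ideal.span {e 1, e 2, e 3, e 5, e 9}
  let π := Ideal.Quotient.mk I
  have hP : P = pairSumProd (univ.val.map X) := by
    rw [pairSumProd_map_univ, P, prod_filter, ← univ_product_univ, prod_product]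
    simp only [← prod_filter, filter_lt_eq_Ioi]
  have hgen (p) (hp : p ∈ ({e 1, e 2, e 3, e 5, e 9} : Set _)) : π p = 0 :=
    Ideal.Quotient.eq_zero_iff_mem.mpr (Ideal.subset_span hp)
  rw [← Ideal.Quotient.eq]
  calc π (homogeneousComponent 16 P)
      = (lambdaTwo 15 fun j => Polynomial.C (π (e j)) * Polynomial.X ^ j).coeff 16 := by
        rw [hP, homogeneousComponent_pairSumProd, ← Polynomial.coeff_map,
          ← Polynomial.coe_mapRingHom, map_lambdaTwo]
        simp [e]
    _ = π (e 8) ^ 2 + π (e 4) ^ 2 * π (e 8) + π (e 4) * π (e 6) ^ 2 :=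
        coeff_lambdaTwo_fifteen (by rw [e, esymm_zero, map_one]) (hgen _ (by simp))
          (hgen _ (by simp)) (hgen _ (by simp)) (hgen _ (by simp)) (hgen _ (by simp))
    _ = π (e 8 ^ 2 + e 4 ^ 2 * e 8 + e 4 * e 6 ^ 2) := by simp only [map_add, map_mul, map_pow]
end

section
/- Let P = ∏_{1≤j<k≤15} (1 + t_j + t_k) in 𝔽₂[t₁,…,t₁₅], and let P₃₂ denote the homogeneous component of P of degree 32. Then P₃₂ is congruent to e₄e₁₄² + e₆e₁₃² + e₈e₁₂² + e₁₀²e₁₂ + e₁₀e₁₁² + e₄²e₁₁e₁₃ + e₆²e₇e₁₃ + e₆²e₁₀² + e₇³e₁₁ + e₈⁴ + e₄⁸ modulo the ideal generated by e₁, e₂, e₃, e₅, e₉ and the element e₄e₁₃ + e₆e₁₁ + e₇e₁₀. -/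
open MvPolynomial Finset

/-! Let `f = ∏ (X + t_j)`. In characteristic two `P² = ∏ f(t_j + 1)`, and `f` can be written as
`A(u) + (X + 1) B(u)` with `u = X² + X`, so that `f(X + 1) = f + B(u)` and `P = Res(B, A)`; the
coefficients of `A` and `B` are sums of elementary symmetric polynomials. Modulo the five `e_i`, `A`
has degree four, and modulo degrees above `32` the pivots met when Euclid's algorithm eliminates
constant terms of `B` against `A` have sixteenth power one. Hence the resultant is a division-free
expression in the `e_i`, and only its part of degree `32` has to be computed. -/

section Resultant

variable {R : Type*} [CommRing R] {f f₁ f₂ g : Polynomial R} {m m₁ m₂ n : ℕ}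

open Polynomial

lemma resultant_mul_left_of_natDegree_le (hf₁ : f₁.natDegree ≤ m₁) (hf₂ : f₂.natDegree ≤ m₂)
    (hg : g.natDegree ≤ n) :
    resultant (f₁ * f₂) g (m₁ + m₂) n = resultant f₁ g m₁ n * resultant f₂ g m₂ n := by
  obtain ⟨k₁, rfl⟩ := Nat.exists_eq_add_of_le hf₁
  obtain ⟨k₂, rfl⟩ := Nat.exists_eq_add_of_le hf₂
  rw [add_add_add_comm, resultant_add_left_deg _ _ _ _ _ natDegree_mul_le,
    resultant_mul_left _ _ _ _ hg, resultant_add_left_deg _ _ _ _ _ le_rfl,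
    resultant_add_left_deg _ _ _ _ _ le_rfl]
  ring

lemma resultant_X_mul_left (hf : f.natDegree ≤ m) (hg : g.natDegree ≤ n) :
    resultant (Polynomial.X * f) g (m + 1) n = g.coeff 0 * resultant f g m n := by
  have hX : resultant (Polynomial.X : R[X]) g 1 n = g.coeff 0 := by
    rw [← pow_one (Polynomial.X : R[X]), resultant_X_pow_left g 1 n hg, pow_one]
  rw [add_comm m, resultant_mul_left_of_natDegree_le natDegree_X_le hf hg, hX]

/-- One step of Euclid's algorithm at the constant terms, in characteristic two: the combination
of `f` and `g` that cancels their constant coefficients, divided by `Polynomial.X`. -/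
noncomputable def lowElim (g f : R[X]) : R[X] :=
  divX (Polynomial.C (g.coeff 0) * f + Polynomial.C (f.coeff 0) * g)

lemma natDegree_lowElim_le (hf : f.natDegree ≤ m + 1) (hg : g.natDegree ≤ m + 1) :
    (lowElim g f).natDegree ≤ m := by
  rw [lowElim, natDegree_divX_eq_natDegree_tsub_one]
  have := natDegree_add_le_of_degree_le ((natDegree_C_mul_le (g.coeff 0) f).trans hf)
    ((natDegree_C_mul_le (f.coeff 0) g).trans hg)
  omega

lemma coeff_zero_pow_mul_resultant (h2 : (2 : R) = 0) (hf : f.natDegree ≤ m + 1)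
    (hg : g.natDegree ≤ n) (hn : n ≤ m + 1) :
    g.coeff 0 ^ n * resultant f g (m + 1) n = g.coeff 0 * resultant (lowElim g f) g m n := by
  have hC2 : (2 : R[X]) = 0 := by rw [← Polynomial.C_ofNat, h2, Polynomial.C_0]
  have helim : Polynomial.C (g.coeff 0) * f =
      Polynomial.X * lowElim g f + g * Polynomial.C (f.coeff 0) := by
    set q := Polynomial.C (g.coeff 0) * f + Polynomial.C (f.coeff 0) * g with hq
    have hconst : Polynomial.C (q.coeff 0) = 0 := by
      rw [hq, Polynomial.coeff_add, Polynomial.coeff_C_mul, Polynomial.coeff_C_mul, mul_comm,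
        ← two_mul, h2, zero_mul, Polynomial.C_0]
    have hdiv : Polynomial.X * lowElim g f + Polynomial.C (q.coeff 0) = q := X_mul_divX_add q
    linear_combination hconst - hdiv + hq - g * Polynomial.C (f.coeff 0) * hC2
  rw [← resultant_C_mul_left, helim, resultant_add_mul_left _ _ _ _ _ (by simpa using hn) hg,
    resultant_X_mul_left (natDegree_lowElim_le hf (hg.trans hn)) hg]

lemma coeff_zero_pow_mul_resultant_iterate (h2 : (2 : R) = 0) (hg : g.natDegree ≤ n) (k : ℕ) :
    ∀ f : R[X], f.natDegree ≤ m + k → n ≤ m + 1 →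
      g.coeff 0 ^ (n * k) * resultant f g (m + k) n =
        g.coeff 0 ^ k * resultant ((lowElim g)^[k] f) g m n := by
  induction k with
  | zero => simp
  | succ k ih =>
    intro f hf hn
    rw [← add_assoc] at hf ⊢
    have hstep := coeff_zero_pow_mul_resultant h2 hf hg (by omega)
    have := ih (lowElim g f) (natDegree_lowElim_le hf (by omega)) hn
    rw [Function.iterate_succ_apply]
    linear_combination g.coeff 0 ^ (n * k) * hstep + g.coeff 0 * this

end Resultant

section ArtinSchreier

open Polynomial

section CommSemiring

variable {R : Type*} [CommSemiring R]

/-- The Jacobsthal polynomials, indexed so that the first two are `1`; in characteristic two they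
express the powers of `X` through `X² + X`. -/
noncomputable def jacobsthal (R : Type*) [CommSemiring R] : ℕ → R[X]
  | 0 => 1
  | 1 => 1
  | k + 2 => jacobsthal R (k + 1) + Polynomial.X * jacobsthal R k

lemma coeff_jacobsthal (k j : ℕ) : (jacobsthal R k).coeff j = (k - j).choose j := by
  induction k using Nat.twoStepInduction generalizing j with
  | zero => cases j <;> simp [jacobsthal, Polynomial.coeff_one]
  | one =>
    rcases j with - | - | j <;> simp [jacobsthal, Polynomial.coeff_one]
  | more k ih₀ ih₁ =>
    rcases j with - | j
    · simp [jacobsthal, ih₁]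
    · rw [jacobsthal, Polynomial.coeff_add, Polynomial.coeff_X_mul, ih₀, ih₁, ← Nat.cast_add]
      rcases le_or_gt j k with hjk | hjk
      · rw [show k + 2 - (j + 1) = k - j + 1 by omega, show k + 1 - (j + 1) = k - j by omega,
          Nat.choose_succ_succ, add_comm]
      · rw [Nat.choose_eq_zero_of_lt (by omega), Nat.choose_eq_zero_of_lt (by omega),
          Nat.choose_eq_zero_of_lt (by omega)]

/-- In characteristic two every `f` is `A(X² + X) + (X + 1) B(X² + X)` for unique polynomials `A`
and `B`. This is `A`; the same operation on `f.divX` gives `B`. -/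
noncomputable def artinSchreierPart (f : R[X]) : R[X] :=
  f.sum fun k a ↦ Polynomial.C a * jacobsthal R k

lemma artinSchreierPart_eq_sum_range {f : R[X]} {n : ℕ} (hf : f.natDegree < n) :
    artinSchreierPart f = ∑ k ∈ range n, Polynomial.C (f.coeff k) * jacobsthal R k :=
  Polynomial.sum_over_range' f (by simp) n hf

lemma coeff_artinSchreierPart {f : R[X]} {n : ℕ} (hf : f.natDegree < n) (j : ℕ) :
    (artinSchreierPart f).coeff j = ∑ k ∈ range n, (k - j).choose j * f.coeff k := by
  simp only [artinSchreierPart_eq_sum_range hf, finsetSum_coeff, Polynomial.coeff_C_mul,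
    coeff_jacobsthal, mul_comm (f.coeff _)]

lemma natDegree_artinSchreierPart_le {f : R[X]} {m : ℕ} (hf : f.natDegree ≤ 2 * m + 1) :
    (artinSchreierPart f).natDegree ≤ m := by
  refine natDegree_le_iff_coeff_eq_zero.mpr fun j hj ↦ ?_
  rw [coeff_artinSchreierPart (Nat.lt_succ_of_le hf)]
  refine sum_eq_zero fun k hk ↦ ?_
  have hk' := mem_range.mp hk
  rw [Nat.choose_eq_zero_of_lt (by omega), Nat.cast_zero, zero_mul]

lemma coeff_artinSchreierPart_self {f : R[X]} {m : ℕ} (hf : f.natDegree ≤ 2 * m) :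
    (artinSchreierPart f).coeff m = f.coeff (2 * m) := by
  rw [coeff_artinSchreierPart (Nat.lt_succ_of_le hf), sum_range_succ, sum_eq_zero, zero_add,
    two_mul, Nat.add_sub_cancel, Nat.choose_self, Nat.cast_one, one_mul]
  intro k hk
  have hk' := mem_range.mp hk
  rw [Nat.choose_eq_zero_of_lt (by omega), Nat.cast_zero, zero_mul]

end CommSemiring

variable {R : Type*} [CommRing R] [CharP R 2]

lemma X_pow_succ_eq_jacobsthal_comp (k : ℕ) :
    (Polynomial.X : R[X]) ^ (k + 1) =
      (jacobsthal R (k + 1)).comp (Polynomial.X ^ 2 + Polynomial.X) +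
        (Polynomial.X + 1) * (jacobsthal R k).comp (Polynomial.X ^ 2 + Polynomial.X) := by
  have h2 : (2 : R[X]) = 0 := CharTwo.two_eq_zero
  induction k with
  | zero => simp only [jacobsthal, one_comp]; linear_combination (-1 : R[X]) * h2
  | succ k ih =>
    simp only [jacobsthal, add_comp, mul_comp, X_comp]
    linear_combination Polynomial.X * ih -
      (jacobsthal R (k + 1)).comp (Polynomial.X ^ 2 + Polynomial.X) * h2

lemma eq_artinSchreierPart_comp (f : R[X]) :
    f = (artinSchreierPart f).comp (Polynomial.X ^ 2 + Polynomial.X) +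
      (Polynomial.X + 1) * (artinSchreierPart f.divX).comp (Polynomial.X ^ 2 + Polynomial.X) := by
  set n := f.natDegree
  have hdivX : f.divX.natDegree < n + 1 := by
    rw [natDegree_divX_eq_natDegree_tsub_one]; omega
  have hsum := f.as_sum_range_C_mul_X_pow' (show f.natDegree < n + 1 + 1 by omega)
  conv_lhs => rw [hsum]
  rw [artinSchreierPart_eq_sum_range (show f.natDegree < n + 1 + 1 by omega),
    artinSchreierPart_eq_sum_range hdivX,
    sum_range_succ', sum_range_succ' _ (n + 1), add_comp, add_right_comm,
    Polynomial.sum_comp, Polynomial.sum_comp, mul_sum, ← sum_add_distrib]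
  congr 1
  · refine sum_congr rfl fun k _ ↦ ?_
    rw [X_pow_succ_eq_jacobsthal_comp, coeff_divX, mul_comp, mul_comp, C_comp]
    ring
  · simp [jacobsthal]

lemma comp_X_add_one (f : R[X]) :
    f.comp (Polynomial.X + 1) =
      f + (artinSchreierPart f.divX).comp (Polynomial.X ^ 2 + Polynomial.X) := by
  have h2 : (2 : R[X]) = 0 := CharTwo.two_eq_zero
  have hu : (Polynomial.X ^ 2 + Polynomial.X : R[X]).comp (Polynomial.X + 1) =
      Polynomial.X ^ 2 + Polynomial.X := by
    simp only [add_comp, pow_comp, X_comp]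
    linear_combination (Polynomial.X + 1) * h2
  have hf := congrArg (Polynomial.comp · (Polynomial.X + 1)) (eq_artinSchreierPart_comp f)
  simp only [add_comp, mul_comp, comp_assoc, hu, X_comp, one_comp] at hf
  linear_combination hf - eq_artinSchreierPart_comp f

lemma mul_comp_X_add_one (f : R[X]) :
    f * f.comp (Polynomial.X + 1) =
      (artinSchreierPart f ^ 2 + artinSchreierPart f.divX *
        (artinSchreierPart f + Polynomial.X * artinSchreierPart f.divX)).comp
          (Polynomial.X ^ 2 + Polynomial.X) := by
  have h2 : (2 : R[X]) = 0 := CharTwo.two_eq_zero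
  rw [comp_X_add_one]
  simp only [add_comp, mul_comp, pow_comp, X_comp]
  have hf := eq_artinSchreierPart_comp f
  set A := (artinSchreierPart f).comp (Polynomial.X ^ 2 + Polynomial.X)
  set B := (artinSchreierPart f.divX).comp (Polynomial.X ^ 2 + Polynomial.X)
  linear_combination (f + B + A + (Polynomial.X + 1) * B) * hf +
    (A * B * (Polynomial.X + 1) + B ^ 2 * (Polynomial.X + 1)) * h2

end ArtinSchreier

section PairProduct

open Polynomial

variable {R : Type*} [CommRing R] {ι : Type*} [Fintype ι]

/-- The monic polynomial with roots `-τ i`; in characteristic two these are the `τ i`. -/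
noncomputable def polyOfRoots (τ : ι → R) : R[X] :=
  ∏ i, (Polynomial.X + Polynomial.C (τ i))

lemma monic_polyOfRoots (τ : ι → R) : (polyOfRoots τ).Monic :=
  monic_prod_of_monic _ _ fun i _ ↦ monic_X_add_C (τ i)

lemma natDegree_polyOfRoots [Nontrivial R] (τ : ι → R) :
    (polyOfRoots τ).natDegree = Fintype.card ι := by
  simp [polyOfRoots, natDegree_prod_of_monic _ _ fun i _ ↦ monic_X_add_C (τ i)]

lemma eval_polyOfRoots (τ : ι → R) (x : R) : (polyOfRoots τ).eval x = ∏ i, (x + τ i) := by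
  simp [polyOfRoots, Polynomial.eval_prod]

variable [CharP R 2]

lemma sq_prod_lt_one_add_add [LinearOrder ι] (τ : ι → R) :
    (∏ p ∈ univ.filter (fun p : ι × ι ↦ p.1 < p.2), (1 + τ p.1 + τ p.2)) ^ 2 =
      ∏ i, ∏ j, (1 + τ i + τ j) := by
  have hgt : ∏ p ∈ univ.filter (fun p : ι × ι ↦ p.2 < p.1), (1 + τ p.1 + τ p.2) =
      ∏ p ∈ univ.filter (fun p : ι × ι ↦ p.1 < p.2), (1 + τ p.1 + τ p.2) :=
    prod_equiv (Equiv.prodComm ι ι) (by simp) fun p _ ↦ add_right_comm 1 (τ p.1) (τ p.2)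
  have hge : ∏ p ∈ univ.filter (fun p : ι × ι ↦ ¬p.1 < p.2), (1 + τ p.1 + τ p.2) =
      ∏ p ∈ univ.filter (fun p : ι × ι ↦ p.2 < p.1), (1 + τ p.1 + τ p.2) := by
    refine (prod_subset (fun p hp ↦ ?_) fun p hp hlt ↦ ?_).symm
    · simp only [mem_filter_univ] at hp ⊢
      exact hp.not_gt
    · simp only [mem_filter_univ, not_lt] at hp hlt
      rw [le_antisymm hlt hp, add_assoc, CharTwo.add_self_eq_zero, add_zero]
  rw [← Fintype.prod_prod_type', ← prod_filter_mul_prod_filter_not univ (fun p : ι × ι ↦ p.1 < p.2),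
    hge, hgt, sq]

variable (τ : ι → R)

lemma prod_one_add_add_eq_eval_artinSchreierPart (i : ι) :
    ∏ j, (1 + τ i + τ j) =
      (artinSchreierPart (polyOfRoots τ).divX).eval (τ i ^ 2 + τ i) := by
  have hroot : (polyOfRoots τ).eval (τ i) = 0 := by
    rw [eval_polyOfRoots]
    exact prod_eq_zero (mem_univ i) (CharTwo.add_self_eq_zero _)
  have hshift := congrArg (Polynomial.eval (τ i)) (comp_X_add_one (polyOfRoots τ))
  simpa [eval_comp, hroot, eval_polyOfRoots, add_comm _ (1 : R)] using hshift

lemma polyOfRoots_sq_add_self [IsDomain R] :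
    polyOfRoots (fun i ↦ τ i ^ 2 + τ i) =
      artinSchreierPart (polyOfRoots τ) ^ 2 + artinSchreierPart (polyOfRoots τ).divX *
        (artinSchreierPart (polyOfRoots τ) +
          Polynomial.X * artinSchreierPart (polyOfRoots τ).divX) := by
  have hinj : Function.Injective (compRingHom (Polynomial.X ^ 2 + Polynomial.X : R[X])) := by
    refine (injective_iff_map_eq_zero _).mpr fun p hp ↦ ?_
    refine (comp_eq_zero_iff.mp hp).resolve_right fun h ↦ ?_
    have := congrArg (Polynomial.coeff · 2) h.2
    simp [Polynomial.coeff_X] at this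
  refine hinj ?_
  rw [coe_compRingHom_apply, coe_compRingHom_apply, ← mul_comp_X_add_one, polyOfRoots, polyOfRoots,
    Polynomial.prod_comp, Polynomial.prod_comp, ← prod_mul_distrib]
  refine prod_congr rfl fun i _ ↦ ?_
  have h2 : (2 : R[X]) = 0 := CharTwo.two_eq_zero
  simp only [add_comp, pow_comp, X_comp, C_comp, Polynomial.C_add, Polynomial.C_pow]
  linear_combination (-Polynomial.X * Polynomial.C (τ i)) * h2

lemma resultant_artinSchreierPart_sq [IsDomain R] {m : ℕ} (hm : Fintype.card ι = 2 * m + 1) :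
    resultant (artinSchreierPart (polyOfRoots τ)) (artinSchreierPart (polyOfRoots τ).divX) m m ^ 2 =
      ∏ i, (artinSchreierPart (polyOfRoots τ).divX).eval (τ i ^ 2 + τ i) := by
  set A := artinSchreierPart (polyOfRoots τ)
  set B := artinSchreierPart (polyOfRoots τ).divX
  have hdeg : (polyOfRoots τ).natDegree = 2 * m + 1 := (natDegree_polyOfRoots τ).trans hm
  have hdivX : (polyOfRoots τ).divX.natDegree ≤ 2 * m := by
    rw [natDegree_divX_eq_natDegree_tsub_one]; omega
  have hA : A.natDegree ≤ m := natDegree_artinSchreierPart_le hdeg.le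
  have hB : B.natDegree ≤ m := natDegree_artinSchreierPart_le (by omega)
  have hBm : B.coeff m = 1 := by
    rw [coeff_artinSchreierPart_self hdivX, coeff_divX, ← hdeg]
    exact monic_polyOfRoots τ
  have hAXB : (A + Polynomial.X * B).natDegree ≤ m + 1 := by
    refine natDegree_add_le_of_degree_le (by omega) (natDegree_mul_le.trans ?_)
    rw [natDegree_X]; omega
  calc resultant A B m m ^ 2
      = resultant (A ^ 2) B (m + m + 1) m := by
        rw [resultant_succ_left_deg _ _ _ _ (by rw [sq]; exact natDegree_mul_le.trans (by omega)),
          sq A, resultant_mul_left_of_natDegree_le hA hA hB, hBm, CharTwo.neg_eq, one_pow]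
        ring
    _ = resultant (polyOfRoots fun i ↦ τ i ^ 2 + τ i) B (2 * m + 1) m := by
        rw [polyOfRoots_sq_add_self, two_mul, add_assoc,
          resultant_add_mul_left _ _ _ _ _ (add_le_add_left hAXB m |>.trans (by omega)) hB]
    _ = ∏ i, B.eval (τ i ^ 2 + τ i) := by
        have hprod := resultant_prod_left univ
          (fun i ↦ Polynomial.X + Polynomial.C (τ i ^ 2 + τ i)) B m
          (by simp only [leadingCoeff_X_add_C, prod_const_one]; exact one_ne_zero) hB
        simp only [natDegree_X_add_C, resultant_X_add_C_left _ _ _ hB, CharTwo.neg_eq] at hprod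
        rw [← hprod, ← hm, ← natDegree_polyOfRoots fun i ↦ τ i ^ 2 + τ i, polyOfRoots]

theorem prod_lt_one_add_add_eq_resultant [IsDomain R] [LinearOrder ι] {m : ℕ}
    (hm : Fintype.card ι = 2 * m + 1) :
    ∏ p ∈ univ.filter (fun p : ι × ι ↦ p.1 < p.2), (1 + τ p.1 + τ p.2) =
      resultant (artinSchreierPart (polyOfRoots τ).divX) (artinSchreierPart (polyOfRoots τ))
        m m := by
  refine CharTwo.sq_injective ?_
  simp only
  rw [resultant_comm, CharTwo.neg_eq, one_pow, one_mul, resultant_artinSchreierPart_sq τ hm,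
    sq_prod_lt_one_add_add]
  exact prod_congr rfl fun i _ ↦ prod_one_add_add_eq_eval_artinSchreierPart τ i

end PairProduct

section Eliminant

variable {α R : Type*}

/-- `lowElim` on coefficient sequences. -/
def lowElimCoeff [Add α] [Mul α] (c a : ℕ → α) (k : ℕ) : α :=
  c 0 * a (k + 1) + a 0 * c (k + 1)

/-- The coefficients of degree at most two of the remainder of `d₃² c` modulo `d`, in
characteristic two, where `d` is a cubic and `c` a quartic without cubic term. -/
def cubicRem [Add α] [Mul α] (d c : ℕ → α) : ℕ → α
  | 0 => d 3 * d 3 * c 0 + c 4 * (d 2 * d 0)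
  | k + 1 => d 3 * d 3 * c (k + 1) + c 4 * (d 3 * d k + d 2 * d (k + 1))

/-- The resultant of the cubic `d` and the quadratic `r`, in characteristic two. -/
def cubicQuadraticResultant [Add α] [Mul α] (d r : ℕ → α) : α :=
  r 0 * (r 0 * (r 0 * (d 3 * d 3) + d 2 * (r 1 * d 3 + r 2 * d 2)) +
      r 1 * (r 1 * (d 1 * d 3) + r 2 * (d 1 * d 2 + d 0 * d 3)) + r 2 * r 2 * (d 1 * d 1)) +
    d 0 * (r 1 * r 1 * (r 1 * d 3 + r 2 * d 2) + r 2 * r 2 * (r 1 * d 1 + r 2 * d 0))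

/-- The resultant of a polynomial `b` of degree seven and a quartic `c` without cubic term, in
characteristic two, when the sixteenth powers of the pivots `c 0` and `d 3` are one: four steps of
`lowElim` reduce `b` to the cubic `d`, and one division reduces `c` to a quadratic. The factor
`(c 0 * d 3 ^ 3) ^ 4` replaces the division by the powers of pivots that these steps introduce. -/
def eliminant [Add α] [Mul α] (b c : ℕ → α) : α :=
  let d := (lowElimCoeff c)^[4] b
  let u := c 0 * (d 3 * (d 3 * d 3))
  u * u * (u * u) * cubicQuadraticResultant d (cubicRem d c)

variable [CommRing R]

lemma coeff_lowElim (g f : Polynomial R) : (lowElim g f).coeff = lowElimCoeff g.coeff f.coeff := by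
  ext k
  simp [lowElim, lowElimCoeff]

lemma coeff_iterate_lowElim (g f : Polynomial R) (k : ℕ) :
    ((lowElim g)^[k] f).coeff = (lowElimCoeff g.coeff)^[k] f.coeff :=
  Function.Semiconj.iterate_right (f := Polynomial.coeff) (coeff_lowElim g) k f

lemma natDegree_iterate_lowElim_le {g : Polynomial R} {m : ℕ} (hg : g.natDegree ≤ m + 1) (k : ℕ) :
    ∀ f : Polynomial R, f.natDegree ≤ m + k → ((lowElim g)^[k] f).natDegree ≤ m := by
  induction k with
  | zero => exact fun f hf ↦ hf
  | succ k ih => exact fun f hf ↦ ih _ (natDegree_lowElim_le hf (by omega))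

lemma sylvester_three_two (p q : Polynomial R) :
    p.sylvester q 3 2 =
      !![q.coeff 0, 0,         0,         p.coeff 0, 0;
         q.coeff 1, q.coeff 0, 0,         p.coeff 1, p.coeff 0;
         q.coeff 2, q.coeff 1, q.coeff 0, p.coeff 2, p.coeff 1;
         0,         q.coeff 2, q.coeff 1, p.coeff 3, p.coeff 2;
         0,         0,         q.coeff 2, 0,         p.coeff 3] := by
  ext i j
  fin_cases i <;> fin_cases j <;> simp [Polynomial.sylvester, Fin.addCases]

lemma resultant_three_two (h2 : (2 : R) = 0) (p q : Polynomial R) :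
    p.resultant q 3 2 = cubicQuadraticResultant p.coeff q.coeff := by
  rw [Polynomial.resultant, sylvester_three_two]
  generalize p.coeff = d, q.coeff = r
  suffices hdet : Matrix.det _ = cubicQuadraticResultant d r + (r 0 * r 1 * r 2 *
      (d 0 * d 3 - d 1 * d 2) - r 0 * r 2 ^ 2 * d 0 * d 2 - r 0 ^ 2 * d 3 *
      (r 1 * d 2 + r 2 * d 1) - d 0 * r 1 * (r 1 ^ 2 * d 3 + r 2 ^ 2 * d 1)) * 2 by
    rw [hdet, h2, mul_zero, add_zero]
  simp [cubicQuadraticResultant, Matrix.det_succ_row_zero (n := 4),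
    Matrix.det_succ_row_zero (n := 3), Matrix.det_fin_three, Fin.succAbove,
    Finset.sum_fin_eq_sum_range, Finset.sum_range_succ]
  ring

lemma coeff_three_pow_mul_resultant_three_four (h2 : (2 : R) = 0) {p q : Polynomial R}
    (hp : p.natDegree ≤ 3) (hq : q.natDegree ≤ 4) (hq₃ : q.coeff 3 = 0) :
    p.coeff 3 ^ 6 * p.resultant q 3 4 =
      p.coeff 3 ^ 2 * cubicQuadraticResultant p.coeff (cubicRem p.coeff q.coeff) := by
  set r : Polynomial R := ∑ i ∈ range 3, Polynomial.monomial i (cubicRem p.coeff q.coeff i) with hr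
  have hrdeg : r.natDegree ≤ 2 := by
    refine Polynomial.natDegree_sum_le_of_forall_le _ _ fun i hi ↦ ?_
    exact (Polynomial.natDegree_monomial_le _).trans (Nat.le_of_lt_succ (mem_range.mp hi))
  have hdivision : Polynomial.C (p.coeff 3 ^ 2) * q = r +
      p * (Polynomial.C (q.coeff 4 * p.coeff 3) * Polynomial.X +
        Polynomial.C (q.coeff 4 * p.coeff 2)) := by
    have hC2 : (2 : Polynomial R) = 0 := by rw [← Polynomial.C_ofNat, h2, Polynomial.C_0]
    have hp_eq := p.as_sum_range_C_mul_X_pow' (Nat.lt_succ_of_le hp)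
    have hq_eq := q.as_sum_range_C_mul_X_pow' (Nat.lt_succ_of_le hq)
    simp only [hr, sum_range_succ, sum_range_zero, zero_add, ← Polynomial.C_mul_X_pow_eq_monomial,
      cubicRem, hq₃, Polynomial.C_0, Polynomial.C_add, Polynomial.C_mul, Polynomial.C_pow]
      at hp_eq hq_eq ⊢
    generalize p.coeff = d, q.coeff = a at hp_eq hq_eq ⊢
    set x : ℕ → Polynomial R := fun i ↦ Polynomial.C (d i)
    linear_combination x 3 ^ 2 * hq_eq - (Polynomial.C (a 4) * (x 3 * Polynomial.X + x 2)) * hp_eq -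
      Polynomial.C (a 4) * (x 2 * x 0 + (x 3 * x 0 + x 2 * x 1) * Polynomial.X +
        (x 3 * x 1 + x 2 ^ 2) * Polynomial.X ^ 2 + x 2 * x 3 * Polynomial.X ^ 3) * hC2
  calc p.coeff 3 ^ 6 * p.resultant q 3 4
      = p.resultant (Polynomial.C (p.coeff 3 ^ 2) * q) 3 4 := by
        rw [Polynomial.resultant_C_mul_right, ← pow_mul]
    _ = p.resultant r 3 (2 + 2) := by
        rw [hdivision, Polynomial.resultant_add_mul_right _ _ _ _ _ _ hp]
        have := Polynomial.natDegree_linear_le (a := q.coeff 4 * p.coeff 3)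
          (b := q.coeff 4 * p.coeff 2)
        omega
    _ = _ := by
        rw [Polynomial.resultant_add_right_deg _ _ _ _ _ hrdeg, resultant_three_two h2]
        simp [cubicQuadraticResultant, hr, sum_range_succ, Polynomial.coeff_monomial]

lemma resultant_seven_four (h2 : (2 : R) = 0) {b c : Polynomial R} (hb : b.natDegree ≤ 7)
    (hc : c.natDegree ≤ 4) (hc₃ : c.coeff 3 = 0) (hc₀ : c.coeff 0 ^ 16 = 1)
    (hd : (lowElimCoeff c.coeff)^[4] b.coeff 3 ^ 16 = 1) :
    b.resultant c 7 4 = eliminant b.coeff c.coeff := by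
  have hlow := coeff_zero_pow_mul_resultant_iterate (m := 3) h2 hc 4 b hb le_rfl
  have hcubic := coeff_three_pow_mul_resultant_three_four h2
    (natDegree_iterate_lowElim_le hc 4 b hb) hc hc₃
  rw [coeff_iterate_lowElim] at hcubic
  rw [hc₀, one_mul] at hlow
  simp only [eliminant, hlow]
  linear_combination (-c.coeff 0 ^ 4 * ((lowElim c)^[4] b).resultant c 3 4) * hd +
    c.coeff 0 ^ 4 * (lowElimCoeff c.coeff)^[4] b.coeff 3 ^ 10 * hcubic

end Eliminant

section SparsePoly

/-- Polynomials over `𝔽₂` in variables of weights `1, 2, …`, modulo weights above `N`, in a form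
suited to kernel evaluation: each monomial is the nonincreasing list of the weights of its
variables. The monomials are kept in increasing lexicographic order, so that equal ones cancel on
addition; no lemma depends on this. -/
@[ext]
structure SparsePoly (N : ℕ) where
  monomials : List (List ℕ)

namespace SparsePoly

variable {N : ℕ}

/-- The sum of the monomial `m`, the argument of `f` and `p`, where `f` is the addition of `p`. -/
def addMonomial (m : List ℕ) (f : List (List ℕ) → List (List ℕ)) :
    List (List ℕ) → List (List ℕ)
  | [] => m :: f []
  | m' :: q =>
    bif m == m' then f q
    else bif m.lex m' then m :: f (m' :: q)
    else m' :: addMonomial m f q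

/-- Addition modulo two, merging two lists of monomials. -/
def addMonomials : List (List ℕ) → List (List ℕ) → List (List ℕ)
  | [] => id
  | m :: p => addMonomial m (addMonomials p)

/-- The product of the monomial `m` and the polynomial `p`, without the terms of weight above
`N`. -/
def monomialMul (N : ℕ) (m : List ℕ) (p : List (List ℕ)) : List (List ℕ) :=
  p.filterMap fun m' ↦
    bif Nat.ble (m.sum + m'.sum) N then some (m.foldr (List.orderedInsert (· ≥ ·)) m') else none

instance : Zero (SparsePoly N) := ⟨⟨[]⟩⟩

instance : One (SparsePoly N) := ⟨⟨[[]]⟩⟩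

instance : Add (SparsePoly N) := ⟨fun p q ↦ ⟨addMonomials p.monomials q.monomials⟩⟩

instance : Mul (SparsePoly N) :=
  ⟨fun p q ↦ ⟨p.monomials.foldr (fun m ↦ addMonomials (monomialMul N m q.monomials)) []⟩⟩

instance : DecidableEq (SparsePoly N) :=
  fun _ _ ↦ decidable_of_iff _ SparsePoly.ext_iff.symm

/-- The variable of weight `i`, where `1` is the variable of weight `0` and the variables with
weight in `S` are replaced by `0`. -/
def varModulo (S : List ℕ) (i : ℕ) : SparsePoly N :=
  if i = 0 then 1 else if i ∈ S then 0 else ⟨[[i]]⟩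

section Evaluation

variable {Q : Type*} [CommSemiring Q] {y : ℕ → Q}

/-- The value at `y` of a list of monomials. -/
def evalMonomials (y : ℕ → Q) (p : List (List ℕ)) : Q :=
  (p.map fun m ↦ (m.map y).prod).sum

/-- The value of a sparse polynomial at `y`. -/
def eval (y : ℕ → Q) (p : SparsePoly N) : Q :=
  evalMonomials y p.monomials

lemma evalMonomials_cons (m : List ℕ) (p : List (List ℕ)) :
    evalMonomials y (m :: p) = (m.map y).prod + evalMonomials y p :=
  List.sum_cons

lemma map_evalMonomials {Q' : Type*} [CommSemiring Q'] (φ : Q →+* Q') (y : ℕ → Q)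
    (p : List (List ℕ)) : φ (evalMonomials y p) = evalMonomials (φ ∘ y) p := by
  simp only [evalMonomials, map_list_sum, map_list_prod, List.map_map, Function.comp_def]

lemma eval_zero : eval y (0 : SparsePoly N) = 0 := rfl

lemma eval_one : eval y (1 : SparsePoly N) = 1 :=
  add_zero 1

lemma eval_varModulo {S : List ℕ} (hy₀ : y 0 = 1) (hyS : ∀ i ∈ S, y i = 0) (i : ℕ) :
    eval y (varModulo S i : SparsePoly N) = y i := by
  rw [varModulo]
  split_ifs with hi hiS
  · rw [eval_one, hi, hy₀]
  · rw [eval_zero, hyS i hiS]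
  · simp [eval, evalMonomials]

end Evaluation

variable {Q : Type*} [CommRing Q] {y : ℕ → Q}

lemma evalMonomials_addMonomial (h2 : (2 : Q) = 0) {f : List (List ℕ) → List (List ℕ)} {a : Q}
    (hf : ∀ q, evalMonomials y (f q) = a + evalMonomials y q) (m : List ℕ) (q : List (List ℕ)) :
    evalMonomials y (addMonomial m f q) = (m.map y).prod + a + evalMonomials y q := by
  induction q with
  | nil => rw [addMonomial, evalMonomials_cons, hf, add_assoc]
  | cons m' q ih =>
    rw [addMonomial]
    cases hm : m == m'
    · cases m.lex m' <;> simp only [cond_true, cond_false, evalMonomials_cons, hf, ih] <;> ring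
    · rw [cond_true, hf, evalMonomials_cons, eq_of_beq hm]
      linear_combination (-(m'.map y).prod) * h2

lemma evalMonomials_addMonomials (h2 : (2 : Q) = 0) (p q : List (List ℕ)) :
    evalMonomials y (addMonomials p q) = evalMonomials y p + evalMonomials y q := by
  induction p generalizing q with
  | nil => exact (zero_add _).symm
  | cons m p ih => rw [addMonomials, evalMonomials_addMonomial h2 ih, evalMonomials_cons]

lemma eval_add (h2 : (2 : Q) = 0) (p q : SparsePoly N) :
    eval y (p + q) = eval y p + eval y q :=
  evalMonomials_addMonomials h2 _ _

lemma prod_map_foldr_orderedInsert (m m' : List ℕ) :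
    ((m.foldr (List.orderedInsert (· ≥ ·)) m').map y).prod = (m.map y).prod * (m'.map y).prod := by
  induction m with
  | nil => simp
  | cons a m ih =>
    rw [List.foldr_cons, ((List.perm_orderedInsert _ _ _).map y).prod_eq, List.map_cons,
      List.prod_cons, ih, List.map_cons, List.prod_cons, mul_assoc]

lemma evalMonomials_monomialMul (hy : ∀ m : List ℕ, N < m.sum → (m.map y).prod = 0) (m : List ℕ)
    (p : List (List ℕ)) :
    evalMonomials y (monomialMul N m p) = (m.map y).prod * evalMonomials y p := by
  induction p with
  | nil => exact (mul_zero _).symm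
  | cons m' p ih =>
    rw [monomialMul] at ih ⊢
    rw [evalMonomials_cons, mul_add, ← ih, List.filterMap_cons]
    cases hle : Nat.ble (m.sum + m'.sum) N
    · have hlt : N < (m ++ m').sum := by
        rw [List.sum_append]
        exact Nat.lt_of_not_le (Nat.not_le_of_not_ble_eq_true (by simp [hle]))
      rw [cond_false, ← List.prod_append, ← List.map_append, hy _ hlt, zero_add]
    · rw [cond_true, evalMonomials_cons, prod_map_foldr_orderedInsert]

lemma eval_mul (h2 : (2 : Q) = 0) (hy : ∀ m : List ℕ, N < m.sum → (m.map y).prod = 0)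
    (p q : SparsePoly N) : eval y (p * q) = eval y p * eval y q := by
  obtain ⟨p⟩ := p
  change evalMonomials y
    (p.foldr (fun m ↦ addMonomials (monomialMul N m q.monomials)) []) = evalMonomials y p * _
  induction p with
  | nil => exact (zero_mul _).symm
  | cons m p ih =>
    rw [List.foldr_cons, evalMonomials_addMonomials h2, evalMonomials_monomialMul hy, ih,
      evalMonomials_cons, add_mul, eval]

lemma eval_iterate_sq (h2 : (2 : Q) = 0)
    (hy : ∀ m : List ℕ, N < m.sum → (m.map y).prod = 0) (k : ℕ) (p : SparsePoly N) :
    eval y ((fun p ↦ p * p)^[k] p) = eval y p ^ 2 ^ k := by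
  induction k with
  | zero => rw [Function.iterate_zero_apply, pow_zero, pow_one]
  | succ k ih => rw [Function.iterate_succ_apply', eval_mul h2 hy, ih, pow_succ, pow_mul, sq]

end SparsePoly

end SparsePoly

section Naturality

variable {α β R : Type*}

/-- The coefficient of `X ^ j` in `artinSchreierPart f`, for `f` of degree less than `n` with
coefficients `a` in characteristic two. Only addition is needed, so that the formula makes sense
for `SparsePoly`. -/
def artinSchreierCoeff [Zero α] [Add α] (a : ℕ → α) (j : ℕ) : ℕ → α
  | 0 => 0
  | n + 1 =>
    if (n - j).choose j % 2 = 1 then a n + artinSchreierCoeff a j n else artinSchreierCoeff a j n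

lemma coeff_artinSchreierPart_eq_artinSchreierCoeff [CommRing R] (h2 : (2 : R) = 0)
    {f : Polynomial R} {n : ℕ} (hf : f.natDegree < n) (j : ℕ) :
    (artinSchreierPart f).coeff j = artinSchreierCoeff f.coeff j n := by
  have hcast (m : ℕ) : (m : R) = if m % 2 = 1 then 1 else 0 := by
    rw [← Nat.mod_add_div m 2]
    rcases Nat.mod_two_eq_zero_or_one m with h | h <;> simp [h, h2]
  rw [coeff_artinSchreierPart hf]
  clear hf
  induction n with
  | zero => rfl
  | succ n ih =>
    rw [sum_range_succ, ih, hcast, artinSchreierCoeff]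
    split_ifs <;> ring

lemma artinSchreierCoeff_congr [Zero α] [Add α] {a b : ℕ → α} {n : ℕ} (h : ∀ k < n, a k = b k)
    (j : ℕ) : artinSchreierCoeff a j n = artinSchreierCoeff b j n := by
  induction n with
  | zero => rfl
  | succ n ih =>
    rw [artinSchreierCoeff, artinSchreierCoeff, h n n.lt_succ_self,
      ih fun k hk ↦ h k (hk.trans n.lt_succ_self)]

variable {φ : α → β}

lemma map_artinSchreierCoeff [Zero α] [Add α] [Zero β] [Add β] (hzero : φ 0 = 0)
    (hadd : ∀ x y, φ (x + y) = φ x + φ y) (a : ℕ → α) (j n : ℕ) :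
    φ (artinSchreierCoeff a j n) = artinSchreierCoeff (φ ∘ a) j n := by
  induction n with
  | zero => exact hzero
  | succ n ih => simp only [artinSchreierCoeff, apply_ite φ, hadd, ih, Function.comp_apply]

lemma coeff_map_artinSchreierPart {Q S : Type*} [CommRing Q] [CommRing S] (h2 : (2 : S) = 0)
    (φ : S →+* Q) {f : Polynomial S} {n : ℕ} (hf : f.natDegree < n) (j : ℕ) :
    ((artinSchreierPart f).map φ).coeff j = artinSchreierCoeff (φ ∘ f.coeff) j n := by
  rw [Polynomial.coeff_map, coeff_artinSchreierPart_eq_artinSchreierCoeff h2 hf,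
    map_artinSchreierCoeff (map_zero φ) (map_add φ)]

variable [Add α] [Mul α] [Add β] [Mul β] (hadd : ∀ x y, φ (x + y) = φ x + φ y)
  (hmul : ∀ x y, φ (x * y) = φ x * φ y)

include hadd hmul

lemma comp_iterate_lowElimCoeff (c a : ℕ → α) (k : ℕ) :
    φ ∘ (lowElimCoeff c)^[k] a = (lowElimCoeff (φ ∘ c))^[k] (φ ∘ a) := by
  refine Function.Semiconj.iterate_right (f := (φ ∘ ·)) (fun a ↦ funext fun i ↦ ?_) k a
  simp only [Function.comp_apply, lowElimCoeff, hadd, hmul]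

lemma map_eliminant (b c : ℕ → α) : φ (eliminant b c) = eliminant (φ ∘ b) (φ ∘ c) := by
  simp only [eliminant, cubicQuadraticResultant, cubicRem, ← comp_iterate_lowElimCoeff hadd hmul,
    hadd, hmul, Function.comp_apply]

end Naturality

section SparseParts

open SparsePoly

/-- The coefficients of `artinSchreierPart f` for `f = ∏ (X + t_j)` with fifteen roots, modulo
`e₁, e₂, e₃, e₅, e₉` and weights above `32`. -/
def sparseEvenPart (j : ℕ) : SparsePoly 32 :=
  artinSchreierCoeff (fun k ↦ varModulo [1, 2, 3, 5, 9] (15 - k)) j 16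

/-- The same as `sparseEvenPart` for `artinSchreierPart f.divX`. -/
def sparseOddPart (j : ℕ) : SparsePoly 32 :=
  artinSchreierCoeff (fun k ↦ varModulo [1, 2, 3, 5, 9] (14 - k)) j 15

lemma sparseEvenPart_eq_zero : ∀ j ∈ [3, 5, 6, 7], sparseEvenPart j = 0 := by
  decide +kernel

lemma sparseOddPart_seven : sparseOddPart 7 = 1 := by
  decide +kernel

lemma iterate_sq_sparseEvenPart_zero : (fun p ↦ p * p)^[4] (sparseEvenPart 0) = 1 := by
  decide +kernel

lemma iterate_sq_pivot :
    (fun p ↦ p * p)^[4] ((lowElimCoeff sparseEvenPart)^[4] sparseOddPart 3) = 1 := by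
  decide +kernel

lemma filter_eliminant_sparseParts :
    (eliminant sparseOddPart sparseEvenPart).monomials.filter (·.sum = 32) =
      [[4, 4, 4, 4, 4, 4, 4, 4], [8, 8, 8, 8], [10, 8, 7, 7], [10, 10, 6, 6], [11, 7, 7, 7],
        [11, 8, 7, 6], [11, 10, 7, 4], [11, 11, 6, 4], [11, 11, 10], [12, 10, 10], [12, 12, 8],
        [13, 7, 6, 6], [13, 8, 7, 4], [13, 13, 6], [14, 14, 4]] := by
  decide +kernel

end SparseParts

section Evaluation

open SparsePoly (varModulo)

lemma coeff_polyOfRoots_X {k : ℕ} (hk : k ≤ 15) :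
    (polyOfRoots (X : Fin 15 → MvPolynomial (Fin 15) (ZMod 2))).coeff k = e (15 - k) := by
  have h := prod_X_add_C_coeff (R := ZMod 2) (Fin 15) k
  rw [Fintype.card_fin] at h
  exact h hk

lemma natDegree_polyOfRoots_X :
    (polyOfRoots (X : Fin 15 → MvPolynomial (Fin 15) (ZMod 2))).natDegree = 15 := by
  rw [natDegree_polyOfRoots, Fintype.card_fin]

lemma natDegree_divX_polyOfRoots_X :
    (polyOfRoots (X : Fin 15 → MvPolynomial (Fin 15) (ZMod 2))).divX.natDegree = 14 := by
  rw [Polynomial.natDegree_divX_eq_natDegree_tsub_one, natDegree_polyOfRoots_X]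

lemma P_eq_resultant :
    P = (artinSchreierPart (polyOfRoots X).divX).resultant
      (artinSchreierPart (polyOfRoots X)) 7 7 :=
  prod_lt_one_add_add_eq_resultant X (Fintype.card_fin 15)

variable {Q : Type*} [CommRing Q] {φ : MvPolynomial (Fin 15) (ZMod 2) →+* Q}
  (h2 : (2 : Q) = 0) (hS : ∀ i ∈ [1, 2, 3, 5, 9], φ (e i) = 0)

include h2 hS

lemma eval_artinSchreierCoeff_varModulo {N : ℕ} (d j n : ℕ) :
    (artinSchreierCoeff (fun k ↦ varModulo [1, 2, 3, 5, 9] (d - k)) j n : SparsePoly N).eval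
      (φ ∘ e) = artinSchreierCoeff (fun k ↦ φ (e (d - k))) j n := by
  have he₀ : (φ ∘ e) 0 = 1 := by simp [e]
  rw [map_artinSchreierCoeff SparsePoly.eval_zero (SparsePoly.eval_add h2)]
  congr 1
  exact funext fun k ↦ SparsePoly.eval_varModulo he₀ hS _

lemma coeff_map_artinSchreierPart_polyOfRoots (j : ℕ) :
    ((artinSchreierPart (polyOfRoots X)).map φ).coeff j = (sparseEvenPart j).eval (φ ∘ e) := by
  rw [sparseEvenPart, eval_artinSchreierCoeff_varModulo h2 hS,
    coeff_map_artinSchreierPart CharTwo.two_eq_zero φ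
      (natDegree_polyOfRoots_X.trans_lt (by norm_num : 15 < 16))]
  refine artinSchreierCoeff_congr (fun k hk ↦ ?_) j
  rw [Function.comp_apply, coeff_polyOfRoots_X (by omega)]

lemma coeff_map_artinSchreierPart_divX_polyOfRoots (j : ℕ) :
    ((artinSchreierPart (polyOfRoots X).divX).map φ).coeff j =
      (sparseOddPart j).eval (φ ∘ e) := by
  rw [sparseOddPart, eval_artinSchreierCoeff_varModulo h2 hS,
    coeff_map_artinSchreierPart CharTwo.two_eq_zero φ
      (natDegree_divX_polyOfRoots_X.trans_lt (by norm_num : 14 < 15))]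
  refine artinSchreierCoeff_congr (fun k hk ↦ ?_) j
  rw [Function.comp_apply, Polynomial.coeff_divX, coeff_polyOfRoots_X (by omega), ← Nat.sub_sub,
    Nat.sub_right_comm]

lemma natDegree_map_artinSchreierPart_polyOfRoots_le :
    ((artinSchreierPart (polyOfRoots X)).map φ).natDegree ≤ 4 := by
  refine Polynomial.natDegree_le_iff_coeff_eq_zero.mpr fun j hj ↦ ?_
  rcases le_or_gt j 7 with hj7 | hj7
  · have hmem : j ∈ [3, 5, 6, 7] := by simp only [List.mem_cons]; omega
    rw [coeff_map_artinSchreierPart_polyOfRoots h2 hS, sparseEvenPart_eq_zero j hmem,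
      SparsePoly.eval_zero]
  · have hdeg := natDegree_artinSchreierPart_le (m := 7) natDegree_polyOfRoots_X.le
    exact Polynomial.coeff_eq_zero_of_natDegree_lt
      (Polynomial.natDegree_map_le.trans_lt (hdeg.trans_lt hj7))

lemma map_P_eq_eval_eliminant (hN : ∀ m : List ℕ, 32 < m.sum → (m.map (φ ∘ e)).prod = 0) :
    φ P = (eliminant sparseOddPart sparseEvenPart).eval (φ ∘ e) := by
  have hadd := SparsePoly.eval_add (N := 32) (y := φ ∘ e) h2
  have hmul := SparsePoly.eval_mul h2 hN
  set A := (artinSchreierPart (polyOfRoots X)).map φ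
  set B := (artinSchreierPart (polyOfRoots X).divX).map φ
  have hA : A.coeff = SparsePoly.eval (φ ∘ e) ∘ sparseEvenPart :=
    funext (coeff_map_artinSchreierPart_polyOfRoots h2 hS)
  have hB : B.coeff = SparsePoly.eval (φ ∘ e) ∘ sparseOddPart :=
    funext (coeff_map_artinSchreierPart_divX_polyOfRoots h2 hS)
  have hAdeg : A.natDegree ≤ 4 := natDegree_map_artinSchreierPart_polyOfRoots_le h2 hS
  have hBdeg : B.natDegree ≤ 7 := Polynomial.natDegree_map_le.trans
    (natDegree_artinSchreierPart_le (natDegree_divX_polyOfRoots_X.trans_le (by norm_num)))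
  have hA₃ : A.coeff 3 = 0 := by
    rw [hA, Function.comp_apply, sparseEvenPart_eq_zero 3 (by simp), SparsePoly.eval_zero]
  have hA₀ : A.coeff 0 ^ 2 ^ 4 = 1 := by
    rw [hA, Function.comp_apply, ← SparsePoly.eval_iterate_sq h2 hN,
      iterate_sq_sparseEvenPart_zero, SparsePoly.eval_one]
  have hB₇ : B.coeff 7 = 1 := by
    rw [hB, Function.comp_apply, sparseOddPart_seven, SparsePoly.eval_one]
  have hpivot : (lowElimCoeff A.coeff)^[4] B.coeff 3 ^ 2 ^ 4 = 1 := by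
    rw [hB, hA, ← comp_iterate_lowElimCoeff hadd hmul, Function.comp_apply,
      ← SparsePoly.eval_iterate_sq h2 hN, iterate_sq_pivot, SparsePoly.eval_one]
  calc φ P = B.resultant A 7 (4 + 3) := by rw [P_eq_resultant, Polynomial.resultant_map_map]
    _ = B.resultant A 7 4 := by
        rw [Polynomial.resultant_add_right_deg _ _ _ _ _ hAdeg, hB₇, one_pow, one_mul]
    _ = eliminant B.coeff A.coeff := resultant_seven_four h2 hBdeg hAdeg hA₃ hA₀ hpivot
    _ = _ := by rw [hB, hA, map_eliminant hadd hmul]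

end Evaluation

section HomogeneousComponents

open SparsePoly (evalMonomials evalMonomials_cons)

attribute [local instance] MvPolynomial.gradedAlgebra

variable {σ R : Type*} [CommSemiring R]

/-- The ideal of polynomials all of whose terms have degree at least `n`, that is, the `n`-th power
of the ideal of the variables; modulo it, polynomials are truncated above degree `n - 1`. -/
noncomputable def orderIdeal (σ R : Type*) [CommSemiring R] (n : ℕ) : Ideal (MvPolynomial σ R) :=
  idealOfVars σ R ^ n

lemma mem_orderIdeal_of_isHomogeneous {p : MvPolynomial σ R} {d n : ℕ}
    (hp : p.IsHomogeneous d) (hn : n ≤ d) : p ∈ orderIdeal σ R n :=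
  (mem_pow_idealOfVars_iff' n p).mpr fun _ hx ↦ hp.coeff_eq_zero (hx.trans_le hn).ne

lemma homogeneousComponent_mem_of_mem_sup_orderIdeal {I : Ideal (MvPolynomial σ R)}
    (hI : I.IsHomogeneous (homogeneousSubmodule σ R)) {d n : ℕ} (hd : d < n)
    {p : MvPolynomial σ R} (hp : p ∈ I ⊔ orderIdeal σ R n) : homogeneousComponent d p ∈ I := by
  obtain ⟨q, hq, r, hr, rfl⟩ := Submodule.mem_sup.mp hp
  have hr₀ : homogeneousComponent d r = 0 := by
    ext x
    rw [coeff_homogeneousComponent, coeff_zero, ite_eq_right_iff]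
    rintro rfl
    exact (mem_pow_idealOfVars_iff' n r).mp hr x hd
  rw [map_add, hr₀, add_zero]
  exact homogeneousComponent_mem_of_mem hI hq d

variable {y : ℕ → MvPolynomial σ R} (hy : ∀ i, (y i).IsHomogeneous i)

include hy

lemma isHomogeneous_prod_map (m : List ℕ) : (m.map y).prod.IsHomogeneous m.sum := by
  induction m with
  | nil => exact isHomogeneous_one σ R
  | cons i m ih => simpa only [List.map_cons, List.prod_cons, List.sum_cons] using (hy i).mul ih

lemma homogeneousComponent_evalMonomials (d : ℕ) (p : List (List ℕ)) :
    homogeneousComponent d (evalMonomials y p) = evalMonomials y (p.filter (·.sum = d)) := by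
  induction p with
  | nil => exact map_zero _
  | cons m p ih =>
    rw [evalMonomials_cons, map_add, ih, List.filter_cons,
      homogeneousComponent_of_mem (isHomogeneous_prod_map hy m)]
    split_ifs with h₁ h₂ h₂ <;> simp_all [evalMonomials_cons]

end HomogeneousComponents

section SpinFifteen

open SparsePoly (evalMonomials)

attribute [local instance] MvPolynomial.gradedAlgebra

lemma isHomogeneous_e (i : ℕ) : (e i).IsHomogeneous i := by
  rw [e, esymm]
  refine IsHomogeneous.sum _ _ _ fun s hs ↦ ?_
  have hprod := IsHomogeneous.prod s (X : Fin 15 → MvPolynomial (Fin 15) (ZMod 2)) (fun _ ↦ 1)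
    fun j _ ↦ isHomogeneous_X (ZMod 2) j
  rwa [sum_const, smul_eq_mul, mul_one, (mem_powersetCard.mp hs).2] at hprod

/-- The ideal generated by `w₁` and Quillen's relations for `Spin(15)`, in degrees at most `32`. -/
noncomputable def quillenIdeal : Ideal (MvPolynomial (Fin 15) (ZMod 2)) :=
  Ideal.span {e 1, e 2, e 3, e 5, e 9, e 4 * e 13 + e 6 * e 11 + e 7 * e 10}

lemma isHomogeneous_quillenIdeal :
    quillenIdeal.IsHomogeneous (homogeneousSubmodule (Fin 15) (ZMod 2)) := by
  have he (i : ℕ) := isHomogeneous_e i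
  refine Ideal.homogeneous_span _ _ fun x hx ↦ ?_
  simp only [Set.mem_insert_iff, Set.mem_singleton_iff] at hx
  rcases hx with hx | hx | hx | hx | hx | hx <;> rw [hx]
  iterate 5 exact ⟨_, he _⟩
  exact ⟨4 + 13, (((he 4).mul (he 13)).add ((he 6).mul (he 11))).add ((he 7).mul (he 10))⟩

lemma e_mem_quillenIdeal {i : ℕ} (hi : i ∈ [1, 2, 3, 5, 9]) : e i ∈ quillenIdeal := by
  simp only [List.mem_cons, List.not_mem_nil, or_false] at hi
  refine Ideal.subset_span ?_
  rcases hi with rfl | rfl | rfl | rfl | rfl <;> simp only [Set.mem_insert_iff, true_or, or_true]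

lemma P_sub_eval_eliminant_mem :
    P - (eliminant sparseOddPart sparseEvenPart).eval e ∈
      quillenIdeal ⊔ orderIdeal (Fin 15) (ZMod 2) 33 := by
  set J := quillenIdeal ⊔ orderIdeal (Fin 15) (ZMod 2) 33
  let φ := Ideal.Quotient.mk J
  have h2 : (2 : MvPolynomial (Fin 15) (ZMod 2) ⧸ J) = 0 := by
    simpa only [map_ofNat, map_zero] using congrArg φ CharTwo.two_eq_zero
  have hS (i : ℕ) (hi : i ∈ [1, 2, 3, 5, 9]) : φ (e i) = 0 :=
    Ideal.Quotient.eq_zero_iff_mem.mpr (Ideal.mem_sup_left (e_mem_quillenIdeal hi))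
  have hN (m : List ℕ) (hm : 32 < m.sum) : (m.map (φ ∘ e)).prod = 0 := by
    rw [← List.map_map, ← map_list_prod]
    exact Ideal.Quotient.eq_zero_iff_mem.mpr (Ideal.mem_sup_right
      (mem_orderIdeal_of_isHomogeneous (isHomogeneous_prod_map isHomogeneous_e m) hm))
  refine Ideal.Quotient.eq.mp ?_
  rw [SparsePoly.eval, SparsePoly.map_evalMonomials]
  exact map_P_eq_eval_eliminant h2 hS hN

lemma homogeneousComponent_P_sub_evalMonomials_mem :
    homogeneousComponent 32 P - evalMonomials e
      ((eliminant sparseOddPart sparseEvenPart).monomials.filter (·.sum = 32)) ∈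
        quillenIdeal := by
  rw [← homogeneousComponent_evalMonomials isHomogeneous_e, ← map_sub, ← SparsePoly.eval]
  exact homogeneousComponent_mem_of_mem_sup_orderIdeal isHomogeneous_quillenIdeal
    (by norm_num) P_sub_eval_eliminant_mem

end SpinFifteen

/-- the degree-32 homogeneous component `P₃₂` of `P` is congruent to
`e₄e₁₄² + e₆e₁₃² + e₈e₁₂² + e₁₀²e₁₂ + e₁₀e₁₁² + e₄²e₁₁e₁₃ + e₆²e₇e₁₃ + e₆²e₁₀²
 + e₇³e₁₁ + e₈⁴ + e₄⁸` modulo the ideal generated by `e₁, e₂, e₃, e₅, e₉` and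
`e₄e₁₃ + e₆e₁₁ + e₇e₁₀`. -/
theorem lambda2_spin15_w32 :
    homogeneousComponent 32 P -
      (e 4 * e 14 ^ 2 + e 6 * e 13 ^ 2 + e 8 * e 12 ^ 2 + e 10 ^ 2 * e 12
        + e 10 * e 11 ^ 2 + e 4 ^ 2 * e 11 * e 13 + e 6 ^ 2 * e 7 * e 13
        + e 6 ^ 2 * e 10 ^ 2 + e 7 ^ 3 * e 11 + e 8 ^ 4 + e 4 ^ 8)
      ∈ Ideal.span {e 1, e 2, e 3, e 5, e 9, e 4 * e 13 + e 6 * e 11 + e 7 * e 10} := by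
  change _ ∈ quillenIdeal
  have hmem := homogeneousComponent_P_sub_evalMonomials_mem
  have hR₁ : e 4 * e 13 + e 6 * e 11 + e 7 * e 10 ∈ quillenIdeal := Ideal.subset_span (by simp)
  have h2 : (2 : MvPolynomial (Fin 15) (ZMod 2)) = 0 := CharTwo.two_eq_zero
  rw [filter_eliminant_sparseParts] at hmem
  -- The multiplier is the difference of the two expressions for `P₃₂`, divided by the relation.
  convert quillenIdeal.add_mem hmem (quillenIdeal.mul_mem_left (e 7 * e 8 + e 4 * e 11) hR₁) using 1
  simp only [SparsePoly.evalMonomials, List.map_cons, List.map_nil, List.prod_cons, List.prod_nil,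
    List.sum_cons, List.sum_nil]
  linear_combination (-(e 4 ^ 2 * e 11 * e 13)) * h2
end
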